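/- Let X be a proper complete separable metric space, 1 <= p < infinity, and f: X -> X a continuous map such that the pushforward f_* maps P_p(X) into itself and is w_p-continuous, f_* has a global attractor in (P_p(X), w_p), and f_* is uniformly w_p-continuous on some w_p-neighborhood of this global attractor. Let (P_n) be MW-maps of order p relative to f with noise levels eps_n -> 0. Then there is n_0 such that for every n >= n_0 there exists a closed, positively P_n-invariant isolating neighborhood N_n in (P_p(X), w_p) whose maximal P_n-invariant set K_n = A_{P_n}(N_n) is nonempty, compact in the weak topology, a weak attractor for P_n with respect to the weak topology, contains all measures lying on bounded full P_n-orbits in P_p(X) (i.e. K_n = A_{P_n}(P_p(X)) for bounded orbits), and contains at least one fixed point of P_n (a stationary measure). -/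

import Mathlib

open MeasureTheory Topology Filter Metric Set
open scoped ENNReal NNReal

noncomputable section

variable {X : Type*}

/-- `π` is a coupling of `μ` and `ν`, i.e. a measure on `X × X` with marginals `μ` and `ν`. -/
def IsCoupling [MeasurableSpace X] (π : Measure (X × X)) (μ ν : Measure X) : Prop :=
  π.map Prod.fst = μ ∧ π.map Prod.snd = ν

/-- The `p`-th power optimal transport cost between `μ` and `ν`. -/
def wCost [MetricSpace X] [MeasurableSpace X] (p : ℝ) (μ ν : Measure X) : ℝ≥0∞ :=
  ⨅ π ∈ {π : Measure (X × X) | IsProbabilityMeasure π ∧ IsCoupling π μ ν},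
    ∫⁻ q, ENNReal.ofReal (dist q.1 q.2 ^ p) ∂π

/-- The Wasserstein distance of order `p` (the `p`-th root of the optimal cost), as a real
number. -/
def Wp [MetricSpace X] [MeasurableSpace X] (p : ℝ) (μ ν : Measure X) : ℝ :=
  ((wCost p μ ν) ^ (1 / p)).toReal

/-- `μ` has finite `p`-th moment about the base point `x₀`. -/
def FiniteMoment [MetricSpace X] [MeasurableSpace X] (p : ℝ) (x₀ : X) (μ : Measure X) : Prop :=
  ∫⁻ x, ENNReal.ofReal (dist x₀ x ^ p) ∂μ < ⊤

/-- The Wasserstein space `P_p(X)`: Borel probability measures with finite `p`-th moment. -/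
def Pp [MetricSpace X] [MeasurableSpace X] (p : ℝ) (x₀ : X) : Set (Measure X) :=
  {μ | IsProbabilityMeasure μ ∧ FiniteMoment p x₀ μ}

/-- The convex combination `t • μ + (1 - t) • ν` of two measures. -/
def mix [MeasurableSpace X] (t : ℝ) (μ ν : Measure X) : Measure X :=
  ENNReal.ofReal t • μ + ENNReal.ofReal (1 - t) • ν

/-- `μₙ → μ` in the weak topology: integrals of bounded continuous functions converge. -/
def WeakConv [MeasurableSpace X] [TopologicalSpace X] (μs : ℕ → Measure X) (μ : Measure X) :
    Prop :=
  ∀ g : BoundedContinuousFunction X ℝ,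
    Tendsto (fun n => ∫ x, g x ∂(μs n)) atTop (𝓝 (∫ x, g x ∂μ))

/-- `μₙ → μ` with respect to the Wasserstein distance of order `p`. -/
def WpTendsto [MetricSpace X] [MeasurableSpace X] (p : ℝ) (μs : ℕ → Measure X)
    (μ : Measure X) : Prop :=
  Tendsto (fun n => Wp p (μs n) μ) atTop (𝓝 0)

/-- A set of measures is sequentially compact for the Wasserstein distance of order `p`. -/
def WpSeqCompact [MetricSpace X] [MeasurableSpace X] (p : ℝ) (S : Set (Measure X)) : Prop :=
  ∀ μs : ℕ → Measure X, (∀ n, μs n ∈ S) →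
    ∃ μ ∈ S, ∃ φ : ℕ → ℕ, StrictMono φ ∧ WpTendsto p (fun n => μs (φ n)) μ

/-- A set of measures is sequentially compact for the weak topology. -/
def WeakSeqCompact [MeasurableSpace X] [TopologicalSpace X] (S : Set (Measure X)) : Prop :=
  ∀ μs : ℕ → Measure X, (∀ n, μs n ∈ S) →
    ∃ μ ∈ S, ∃ φ : ℕ → ℕ, StrictMono φ ∧ WeakConv (fun n => μs (φ n)) μ

/-- A set `N ⊆ P_p(X)` is admissible for a sequence of maps `F n` on measures: whenever
orbit segments `F n^[0..m n] (μs n)` stay in `N` with `m n → ∞`, the endpoints have a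
subsequence converging in `(P_p(X), w_p)`. -/
def WpSeqAdmissible [MetricSpace X] [MeasurableSpace X] (p : ℝ) (x₀ : X)
    (F : ℕ → Measure X → Measure X) (N : Set (Measure X)) : Prop :=
  ∀ (μs : ℕ → Measure X) (m : ℕ → ℕ), Tendsto m atTop atTop →
    (∀ n, ∀ k ≤ m n, (F n)^[k] (μs n) ∈ N) →
    ∃ μ ∈ Pp p x₀, ∃ φ : ℕ → ℕ, StrictMono φ ∧
      WpTendsto p (fun j => (F (φ j))^[m (φ j)] (μs (φ j))) μ

/-- A set `N ⊆ P_p(X)` is `F`-admissible. -/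
def WpAdmissible [MetricSpace X] [MeasurableSpace X] (p : ℝ) (x₀ : X)
    (F : Measure X → Measure X) (N : Set (Measure X)) : Prop :=
  WpSeqAdmissible p x₀ (fun _ => F) N

/-- A subset of `P_p(X)` that is (sequentially) closed in `(P_p(X), w_p)`. -/
def WpClosed [MetricSpace X] [MeasurableSpace X] (p : ℝ) (x₀ : X)
    (N : Set (Measure X)) : Prop :=
  N ⊆ Pp p x₀ ∧ ∀ (μs : ℕ → Measure X) (μ : Measure X), (∀ n, μs n ∈ N) →
    μ ∈ Pp p x₀ → WpTendsto p μs μ → μ ∈ N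

/-- A subset of `P_p(X)` that is bounded for `w_p`. -/
def WpBounded [MetricSpace X] [MeasurableSpace X] (p : ℝ) (x₀ : X)
    (N : Set (Measure X)) : Prop :=
  ∃ R : ℝ, ∀ μ ∈ N, Wp p μ (Measure.dirac x₀) ≤ R

/-- The (sequential) closure of a subset of `P_p(X)` in `(P_p(X), w_p)`. -/
def WpClosure [MetricSpace X] [MeasurableSpace X] (p : ℝ) (x₀ : X)
    (S : Set (Measure X)) : Set (Measure X) :=
  {μ | μ ∈ Pp p x₀ ∧ ∃ μs : ℕ → Measure X, (∀ n, μs n ∈ S) ∧ WpTendsto p μs μ}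

/-- A set `N` is positively invariant under `g`. -/
def PosInvariant {Y : Type*} (g : Y → Y) (N : Set Y) : Prop :=
  ∀ x ∈ N, g x ∈ N

/-- There is a full left solution of `g` in `N` through `x` (indexed so that `u n = x_{-n}`). -/
def FullLeftSolution {Y : Type*} (g : Y → Y) (N : Set Y) (x : Y) : Prop :=
  ∃ u : ℕ → Y, u 0 = x ∧ (∀ k, g (u (k + 1)) = u k) ∧ ∀ k, u k ∈ N

/-- The maximal positively invariant subset `A⁺(N)` of `N`. -/
def aPlus {Y : Type*} (g : Y → Y) (N : Set Y) : Set Y :=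
  {x | x ∈ N ∧ ∀ k : ℕ, g^[k] x ∈ N}

/-- The maximal negatively invariant subset `A⁻(N)` of `N`. -/
def aMinus {Y : Type*} (g : Y → Y) (N : Set Y) : Set Y :=
  {x | x ∈ N ∧ FullLeftSolution g N x}

/-- The maximal invariant subset `A(N) = A⁺(N) ∩ A⁻(N)` of `N`. -/
def maxInv {Y : Type*} (g : Y → Y) (N : Set Y) : Set Y :=
  aPlus g N ∩ aMinus g N

/-- The weak ω-limit set of `N` under a map `P` on measures, with respect to the weak
topology of `P(X)`. -/
def omegaWeakM [MetricSpace X] [MeasurableSpace X] (P : Measure X → Measure X)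
    (N : Set (Measure X)) : Set (Measure X) :=
  {ν | ∃ (μs : ℕ → Measure X) (m : ℕ → ℕ), (∀ k, μs k ∈ N) ∧ Tendsto m atTop atTop ∧
    WeakConv (fun k => P^[m k] (μs k)) ν}

/-!
Moving the fraction `s ^ p` of the mass of a fixed measure `α` to a point `y`, with `s` of order
`1 / (1 + d(x₀, y))`, changes `α` by a small amount in `w_p`, uniformly in `y`. Uniform continuity
of `f_*` on a ball about `α ∈ A` can therefore be tested on such spikes, and it yields control of
`f` at infinity: `f` has linear growth, and points `x, y` with `d(x, y) ≤ d * (1 + d(x₀, x))` have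
images at distance at most `e * (1 + d(x₀, x))`. Attraction of the bounded family of spikes over
`δ_{x₀}` shows that some iterate satisfies `d(x₀, f^k x) ≤ b + d(x₀, x) / 4`. If the noise level is
small, these facts survive for the Markov operator as a drift inequality
`N (P^k μ) ≤ N μ / 2 + C`, where `N μ = w_p(μ, δ_{x₀})`. Since `X` is proper, sublevel sets of `N`
are weakly compact, so the measures whose forward `P`-orbit stays in a large sublevel set form the
isolating neighborhood; averaging along orbits gives a stationary measure.
-/

section Coupling

variable [MeasurableSpace X] {p : ℝ} {μ ν : Measure X}

lemma IsCoupling.eLpNorm'_fst {π : Measure (X × X)} (h : IsCoupling π μ ν) {g : X → ℝ≥0∞}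
    (hg : Measurable g) : eLpNorm' (fun q => g q.1) p π = eLpNorm' g p μ := by
  simp only [eLpNorm', ← h.1, lintegral_map (hg.enorm.pow_const p) measurable_fst]

lemma IsCoupling.eLpNorm'_snd {π : Measure (X × X)} (h : IsCoupling π μ ν) {g : X → ℝ≥0∞}
    (hg : Measurable g) : eLpNorm' (fun q => g q.2) p π = eLpNorm' g p ν := by
  simp only [eLpNorm', ← h.2, lintegral_map (hg.enorm.pow_const p) measurable_snd]

lemma isCoupling_prod (μ ν : Measure X) [IsProbabilityMeasure μ] [IsProbabilityMeasure ν] :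
    IsCoupling (μ.prod ν) μ ν := by
  simp [IsCoupling]

lemma isCoupling_diag (μ : Measure X) : IsCoupling (μ.map fun x => (x, x)) μ μ := by
  constructor <;> rw [Measure.map_map (by fun_prop) (by fun_prop)] <;> exact Measure.map_id

lemma IsCoupling.swap {π : Measure (X × X)} (h : IsCoupling π μ ν) :
    IsCoupling (π.map Prod.swap) ν μ := by
  constructor <;> rw [Measure.map_map (by fun_prop) measurable_swap]
  exacts [h.2, h.1]

end Coupling

lemma ofReal_dist_rpow [MetricSpace X] {p : ℝ} (hp : 0 ≤ p) (x y : X) :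
    ENNReal.ofReal (dist x y ^ p) = edist x y ^ p := by
  rw [edist_dist, ENNReal.ofReal_rpow_of_nonneg dist_nonneg hp]

section ExtendedWasserstein

variable [MetricSpace X] [MeasurableSpace X]

/-- The Wasserstein distance with values in `[0, ∞]`, so that no finiteness has to be checked;
`Wp` is its real part. -/
def eWp (p : ℝ) (μ ν : Measure X) : ℝ≥0∞ := wCost p μ ν ^ (1 / p)

/-- The `L^p(μ)`-norm of the distance to `z`, i.e. the Wasserstein distance of a probability
measure `μ` to `δ_z` (see `eWp_dirac`). -/
def momentNorm (p : ℝ) (z : X) (μ : Measure X) : ℝ≥0∞ := eLpNorm' (edist z) p μ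

variable {p : ℝ} {μ ν : Measure X}

lemma le_eWp_iff (hp : 0 < p) {c : ℝ≥0∞} :
    c ≤ eWp p μ ν ↔ ∀ π : Measure (X × X), IsProbabilityMeasure π → IsCoupling π μ ν →
      c ≤ eLpNorm' (fun q => edist q.1 q.2) p π := by
  simp only [eWp, wCost, eLpNorm', one_div, ENNReal.le_rpow_inv_iff hp, enorm_eq_self,
    ofReal_dist_rpow hp.le, le_iInf_iff, Set.mem_ofPred_eq, and_imp]

lemma eWp_le_of_isCoupling (hp : 0 < p) {π : Measure (X × X)} [IsProbabilityMeasure π]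
    (h : IsCoupling π μ ν) : eWp p μ ν ≤ eLpNorm' (fun q => edist q.1 q.2) p π :=
  (le_eWp_iff hp).1 le_rfl π inferInstance h

lemma mem_Pp_iff (hp : 0 < p) {z : X} :
    μ ∈ Pp p z ↔ IsProbabilityMeasure μ ∧ momentNorm p z μ ≠ ⊤ := by
  simp only [Pp, FiniteMoment, momentNorm, eLpNorm', ofReal_dist_rpow hp.le, lt_top_iff_ne_top,
    enorm_eq_self, Set.mem_ofPred_eq, ne_eq, ENNReal.rpow_eq_top_iff_of_pos (one_div_pos.2 hp)]

lemma momentNorm_ne_top (hp : 0 < p) {z : X} (hμ : μ ∈ Pp p z) : momentNorm p z μ ≠ ⊤ :=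
  ((mem_Pp_iff hp).1 hμ).2

variable [BorelSpace X]

lemma momentNorm_dirac (hp : 0 < p) (z a : X) : momentNorm p z (Measure.dirac a) = edist z a := by
  rw [momentNorm, eLpNorm', lintegral_dirac' _ (measurable_edist_right.enorm.pow_const p),
    enorm_eq_self, one_div, ENNReal.rpow_rpow_inv hp.ne']

lemma dirac_mem_Pp (hp : 0 < p) (z a : X) : Measure.dirac a ∈ Pp p z :=
  (mem_Pp_iff hp).2 ⟨inferInstance, by rw [momentNorm_dirac hp]; exact edist_ne_top z a⟩

lemma momentNorm_le_edist_add (hp : 1 ≤ p) (a b : X) [IsProbabilityMeasure μ] :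
    momentNorm p a μ ≤ edist a b + momentNorm p b μ :=
  calc
    eLpNorm' (edist a) p μ ≤ eLpNorm' ((fun _ => edist a b) + edist b) p μ :=
      eLpNorm'_mono_enorm_ae (by linarith) (.of_forall fun x => edist_triangle a b x)
    _ ≤ eLpNorm' (fun _ => edist a b) p μ + momentNorm p b μ :=
      eLpNorm'_add_le aestronglyMeasurable_const
        measurable_edist_right.aestronglyMeasurable hp
    _ = edist a b + momentNorm p b μ := by
      rw [eLpNorm'_const_of_isProbabilityMeasure _ (by linarith), enorm_eq_self]

variable [SecondCountableTopology X]

lemma eWp_comm (hp : 0 < p) (μ ν : Measure X) : eWp p μ ν = eWp p ν μ := by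
  suffices h : ∀ μ ν : Measure X, eWp p μ ν ≤ eWp p ν μ from le_antisymm (h μ ν) (h ν μ)
  intro μ ν
  rw [le_eWp_iff hp]
  intro π _ hπ
  have : IsProbabilityMeasure (π.map Prod.swap) :=
    Measure.isProbabilityMeasure_map measurable_swap.aemeasurable
  grw [eWp_le_of_isCoupling hp hπ.swap]
  rw [eLpNorm', eLpNorm', lintegral_map (by fun_prop) measurable_swap]
  simp only [Prod.fst_swap, Prod.snd_swap, edist_comm, le_refl]

lemma eLpNorm'_le_add_eWp (hp : 1 ≤ p) {g : X → ℝ≥0∞} (hg : Measurable g)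
    (hlip : ∀ x y, g x ≤ g y + edist x y) :
    eLpNorm' g p μ ≤ eLpNorm' g p ν + eWp p μ ν := by
  rw [← tsub_le_iff_left, le_eWp_iff (by linarith)]
  intro π _ hπ
  rw [tsub_le_iff_left, ← hπ.eLpNorm'_fst hg, ← hπ.eLpNorm'_snd hg]
  calc
    eLpNorm' (fun q => g q.1) p π
        ≤ eLpNorm' ((fun q : X × X => g q.2) + fun q => edist q.1 q.2) p π :=
      eLpNorm'_mono_enorm_ae (by linarith) (.of_forall fun q => hlip q.1 q.2)
    _ ≤ _ := eLpNorm'_add_le (hg.comp measurable_snd).aestronglyMeasurable (by fun_prop) hp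

lemma momentNorm_le_add_eWp (hp : 1 ≤ p) (z : X) :
    momentNorm p z μ ≤ momentNorm p z ν + eWp p μ ν :=
  eLpNorm'_le_add_eWp hp measurable_edist_right (edist_triangle_right z)

lemma eWp_self (hp : 0 < p) (μ : Measure X) [IsProbabilityMeasure μ] : eWp p μ μ = 0 := by
  have : IsProbabilityMeasure (μ.map fun x => (x, x)) :=
    Measure.isProbabilityMeasure_map (by fun_prop)
  refine nonpos_iff_eq_zero.1 ((eWp_le_of_isCoupling hp (isCoupling_diag μ)).trans_eq ?_)
  rw [eLpNorm', lintegral_map (by fun_prop) (by fun_prop)]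
  simp [hp]

lemma eWp_le_momentNorm_add (hp : 1 ≤ p) (z : X) [IsProbabilityMeasure μ]
    [IsProbabilityMeasure ν] : eWp p μ ν ≤ momentNorm p z μ + momentNorm p z ν := by
  have hπ := isCoupling_prod μ ν
  have hz : Measurable (edist z) := measurable_edist_right
  rw [momentNorm, momentNorm, ← hπ.eLpNorm'_fst hz, ← hπ.eLpNorm'_snd hz]
  calc
    eWp p μ ν ≤ eLpNorm' (fun q => edist q.1 q.2) p (μ.prod ν) :=
      eWp_le_of_isCoupling (by linarith) hπ
    _ ≤ eLpNorm' ((fun q : X × X => edist z q.1) + fun q => edist z q.2) p (μ.prod ν) :=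
      eLpNorm'_mono_enorm_ae (by linarith) (.of_forall fun q => edist_triangle_left _ _ z)
    _ ≤ _ := eLpNorm'_add_le (by fun_prop) (by fun_prop) hp

lemma eWp_dirac (hp : 1 ≤ p) (z : X) [IsProbabilityMeasure μ] :
    eWp p μ (Measure.dirac z) = momentNorm p z μ := by
  have hz : momentNorm p z (Measure.dirac z) = 0 := by
    rw [momentNorm_dirac (by linarith), edist_self]
  apply le_antisymm
  · simpa [hz] using eWp_le_momentNorm_add hp z (μ := μ) (ν := Measure.dirac z)
  · simpa [hz] using momentNorm_le_add_eWp hp z (μ := μ) (ν := Measure.dirac z)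

lemma ofReal_Wp (hp : 1 ≤ p) {z : X} (hμ : μ ∈ Pp p z) (hν : ν ∈ Pp p z) :
    ENNReal.ofReal (Wp p μ ν) = eWp p μ ν := by
  have := hμ.1
  have := hν.1
  have hp' : 0 < p := by linarith
  exact ENNReal.ofReal_toReal <| ne_top_of_le_ne_top
    (ENNReal.add_ne_top.2 ⟨momentNorm_ne_top hp' hμ, momentNorm_ne_top hp' hν⟩)
    (eWp_le_momentNorm_add hp z)

lemma Wp_le_iff (hp : 1 ≤ p) {z : X} (hμ : μ ∈ Pp p z) (hν : ν ∈ Pp p z) {r : ℝ} (hr : 0 ≤ r) :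
    Wp p μ ν ≤ r ↔ eWp p μ ν ≤ ENNReal.ofReal r := by
  rw [← ofReal_Wp hp hμ hν, ENNReal.ofReal_le_ofReal_iff hr]

lemma ofReal_Wp_dirac (hp : 1 ≤ p) {z : X} (hμ : μ ∈ Pp p z) :
    ENNReal.ofReal (Wp p μ (Measure.dirac z)) = momentNorm p z μ := by
  have := hμ.1
  rw [ofReal_Wp hp hμ (dirac_mem_Pp (by linarith) z z), eWp_dirac hp]

lemma wpBounded_setOf_momentNorm_le (hp : 1 ≤ p) (z : X) (r : ℝ≥0) :
    WpBounded p z {μ | μ ∈ Pp p z ∧ momentNorm p z μ ≤ r} := by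
  refine ⟨r, fun μ hμ => (ENNReal.ofReal_le_ofReal_iff r.2).1 ?_⟩
  rw [ofReal_Wp_dirac hp hμ.1]
  simpa using hμ.2

lemma Wp_lt_iff (hp : 1 ≤ p) {z : X} (hμ : μ ∈ Pp p z) (hν : ν ∈ Pp p z) {r : ℝ} :
    Wp p μ ν < r ↔ eWp p μ ν < ENNReal.ofReal r := by
  rw [← ofReal_Wp hp hμ hν,
    ENNReal.ofReal_lt_ofReal_iff_of_nonneg (p := Wp p μ ν) ENNReal.toReal_nonneg]

end ExtendedWasserstein

section Mixtures

variable [MeasurableSpace X] {p : ℝ} {s : ℝ≥0} {μ ν : Measure X}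

lemma coe_rpow_le_one (hp : 0 ≤ p) (hs : s ≤ 1) : (s : ℝ) ^ p ≤ 1 :=
  Real.rpow_le_one s.coe_nonneg (by exact_mod_cast hs) hp

lemma ofReal_add_ofReal_one_sub {t : ℝ} (h0 : 0 ≤ t) (h1 : t ≤ 1) :
    ENNReal.ofReal t + ENNReal.ofReal (1 - t) = 1 := by
  rw [← ENNReal.ofReal_add h0 (by linarith), add_sub_cancel, ENNReal.ofReal_one]

lemma isProbabilityMeasure_mix {t : ℝ} (h0 : 0 ≤ t) (h1 : t ≤ 1) [IsProbabilityMeasure μ]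
    [IsProbabilityMeasure ν] : IsProbabilityMeasure (mix t μ ν) :=
  ⟨by simp [mix, ofReal_add_ofReal_one_sub h0 h1]⟩

lemma mix_self {t : ℝ} (h0 : 0 ≤ t) (h1 : t ≤ 1) (μ : Measure X) : mix t μ μ = μ := by
  rw [mix, ← add_smul, ofReal_add_ofReal_one_sub h0 h1, one_smul]

lemma map_mix {Y : Type*} [MeasurableSpace Y] {t : ℝ} {g : X → Y} (hg : Measurable g) :
    (mix t μ ν).map g = mix t (μ.map g) (ν.map g) := by
  rw [mix, mix, Measure.map_add _ _ hg, Measure.map_smul, Measure.map_smul]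

lemma IsCoupling.mix {t : ℝ} {π ρ : Measure (X × X)} {μ' ν' : Measure X} (hπ : IsCoupling π μ ν)
    (hρ : IsCoupling ρ μ' ν') : IsCoupling (mix t π ρ) (mix t μ μ') (mix t ν ν') := by
  constructor
  · rw [map_mix measurable_fst, hπ.1, hρ.1]
  · rw [map_mix measurable_snd, hπ.2, hρ.2]

lemma eLpNorm'_rpow_smul_measure (hp : 0 < p) (s : ℝ≥0) (g : X → ℝ≥0∞) :
    eLpNorm' g p (ENNReal.ofReal ((s : ℝ) ^ p) • μ) = s * eLpNorm' g p μ := by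
  rw [eLpNorm'_smul_measure hp.le, ← ENNReal.ofReal_rpow_of_nonneg s.coe_nonneg hp.le,
    ENNReal.ofReal_coe_nnreal, one_div, ENNReal.rpow_rpow_inv hp.ne']

lemma mul_eLpNorm'_le_eLpNorm'_mix (hp : 0 < p) (s : ℝ≥0) (g : X → ℝ≥0∞) :
    s * eLpNorm' g p μ ≤ eLpNorm' g p (mix ((s : ℝ) ^ p) μ ν) := by
  rw [← eLpNorm'_rpow_smul_measure hp]
  exact eLpNorm'_mono_measure g (Measure.le_add_right le_rfl) hp.le

lemma eLpNorm'_add_measure_of_ae_eq_zero (hp : 0 < p) {g : X → ℝ≥0∞} (hg : g =ᵐ[ν] 0) :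
    eLpNorm' g p (μ + ν) = eLpNorm' g p μ := by
  have hν : ∫⁻ x, ‖g x‖ₑ ^ p ∂ν = 0 := by
    apply lintegral_eq_zero_of_ae_eq_zero
    filter_upwards [hg] with x hx
    simp [hx, hp]
  rw [eLpNorm', lintegral_add_measure, hν, add_zero, eLpNorm']

lemma eLpNorm'_mix_of_right_ae_eq_zero (hp : 0 < p) {g : X → ℝ≥0∞} (hg : g =ᵐ[ν] 0) :
    eLpNorm' g p (mix ((s : ℝ) ^ p) μ ν) = s * eLpNorm' g p μ := by
  rw [mix, eLpNorm'_add_measure_of_ae_eq_zero hp (Measure.ae_smul_measure hg _),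
    eLpNorm'_rpow_smul_measure hp]

lemma eLpNorm'_mix_le_of_left_ae_eq_zero (hp : 0 < p) {t : ℝ} (h0 : 0 ≤ t) {g : X → ℝ≥0∞}
    (hg : g =ᵐ[μ] 0) : eLpNorm' g p (mix t μ ν) ≤ eLpNorm' g p ν := by
  rw [mix, add_comm, eLpNorm'_add_measure_of_ae_eq_zero hp (Measure.ae_smul_measure hg _),
    eLpNorm'_smul_measure hp.le]
  refine mul_le_of_le_one_left' (ENNReal.rpow_le_one ?_ (by positivity))
  exact ENNReal.ofReal_le_one.2 (by linarith)

/-- The probability measure `α` with the fraction `s ^ p` of its mass moved to the point `a`.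
The exponent makes Wasserstein distances between spikes scale linearly in `s`. -/
def spike (p : ℝ) (s : ℝ≥0) (a : X) (α : Measure X) : Measure X :=
  mix ((s : ℝ) ^ p) (Measure.dirac a) α

lemma map_spike {α : Measure X} {f : X → X} (hf : Measurable f) (a : X) :
    (spike p s a α).map f = spike p s (f a) (α.map f) := by
  rw [spike, spike, map_mix hf, Measure.map_dirac' hf]

lemma eLpNorm'_indicator (hp : 0 < p) {S : Set X} (hS : MeasurableSet S) (g : X → ℝ≥0∞) :
    eLpNorm' (S.indicator g) p μ = eLpNorm' g p (μ.restrict S) := by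
  rw [eLpNorm', eLpNorm', ← lintegral_indicator hS]
  congr! 3 with x
  by_cases hx : x ∈ S <;> simp [hx, hp]

end Mixtures

lemma tsub_edist_le_indicator [MetricSpace X] {z a : X} {r : ℝ≥0∞} (ha : 2 * r ≤ edist z a)
    (x : X) :
    r - edist a x ≤ {x | r ≤ edist z x}.indicator (edist z) x := by
  by_cases hx : r ≤ edist z x
  · rw [Set.indicator_of_mem (by exact hx)]
    exact tsub_le_self.trans hx
  · suffices r ≤ edist a x by rw [tsub_eq_zero_of_le this]; exact zero_le
    by_contra! hax
    exact ((two_mul r ▸ ha).trans (edist_triangle_right z a x)).not_gt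
      (ENNReal.add_lt_add (not_le.1 hx) hax)

section Spikes

variable [MetricSpace X] [MeasurableSpace X] {p : ℝ} {s : ℝ≥0} {μ ν α : Measure X}

lemma mix_mem_Pp {z : X} {t : ℝ} (h0 : 0 ≤ t) (h1 : t ≤ 1) (hμ : μ ∈ Pp p z) (hν : ν ∈ Pp p z) :
    mix t μ ν ∈ Pp p z := by
  have := hμ.1
  have := hν.1
  refine ⟨isProbabilityMeasure_mix h0 h1, ?_⟩
  rw [FiniteMoment, mix, lintegral_add_measure, lintegral_smul_measure, lintegral_smul_measure]
  exact ENNReal.add_lt_top.2 ⟨ENNReal.mul_lt_top ENNReal.ofReal_lt_top hμ.2,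
    ENNReal.mul_lt_top ENNReal.ofReal_lt_top hν.2⟩

variable [BorelSpace X]

lemma spike_mem_Pp (hp : 0 < p) (hs : s ≤ 1) {z : X} (a : X) (hα : α ∈ Pp p z) :
    spike p s a α ∈ Pp p z :=
  mix_mem_Pp (by positivity) (coe_rpow_le_one hp.le hs) (dirac_mem_Pp hp z a) hα

lemma mul_edist_le_momentNorm_spike (hp : 0 < p) (z a : X) :
    s * edist z a ≤ momentNorm p z (spike p s a α) := by
  rw [← momentNorm_dirac hp]
  exact mul_eLpNorm'_le_eLpNorm'_mix hp s _

lemma tendsto_momentNorm_restrict_zero (hp : 0 < p) {z : X} (hα : α ∈ Pp p z) :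
    Tendsto (fun r : ℝ≥0 => momentNorm p z (α.restrict {x | (r : ℝ≥0∞) ≤ edist z x})) atTop
      (𝓝 0) := by
  have := hα.1
  have hmeasure :
      Tendsto (fun r : ℝ≥0 => α {x | (r : ℝ≥0∞) ≤ edist z x}) atTop (𝓝 0) := by
    have hInter : ⋂ r : ℝ≥0, {x | (r : ℝ≥0∞) ≤ edist z x} = ∅ :=
      Set.eq_empty_of_forall_notMem fun x hx => by
        have h : ((nndist z x + 1 : ℝ≥0) : ℝ≥0∞) ≤ edist z x := Set.mem_iInter.1 hx _
        rw [edist_nndist, ENNReal.coe_le_coe] at h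
        exact (lt_add_one (nndist z x)).not_ge h
    rw [← measure_empty (μ := α), ← hInter]
    exact tendsto_measure_iInter_atTop
      (fun r => (measurableSet_le measurable_const measurable_edist_right).nullMeasurableSet)
      (fun r r' hr x hx => le_trans (ENNReal.coe_le_coe.2 hr) hx) ⟨0, measure_ne_top _ _⟩
  have hfin : ∫⁻ x, ‖edist z x‖ₑ ^ p ∂α ≠ ⊤ := by
    simpa only [enorm_eq_self, ofReal_dist_rpow hp.le] using hα.2.ne
  have hroot := ENNReal.continuous_rpow_const (y := 1 / p) |>.tendsto 0
  rw [ENNReal.zero_rpow_of_pos (by positivity)] at hroot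
  exact hroot.comp (tendsto_setLIntegral_zero hfin hmeasure)

variable [SecondCountableTopology X]

lemma eWp_spike_mix_le (hp : 0 < p) (hs : s ≤ 1) (a : X) [IsProbabilityMeasure ν]
    [IsProbabilityMeasure α] :
    eWp p (spike p s a α) (mix ((s : ℝ) ^ p) ν α) ≤ s * momentNorm p a ν := by
  set Δ : Measure (X × X) := α.map fun x => (x, x)
  have : IsProbabilityMeasure Δ := Measure.isProbabilityMeasure_map (by fun_prop)
  have := isProbabilityMeasure_mix (μ := (Measure.dirac a).prod ν) (ν := Δ) (t := (s : ℝ) ^ p)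
    (by positivity) (coe_rpow_le_one hp.le hs)
  have hΔ : (fun q : X × X => edist q.1 q.2) =ᵐ[Δ] 0 :=
    (ae_map_iff (by fun_prop) (measurableSet_eq_fun (by fun_prop) (by fun_prop))).2 <|
      .of_forall fun x => edist_self x
  calc
    eWp p (spike p s a α) (mix ((s : ℝ) ^ p) ν α)
        ≤ eLpNorm' (fun q => edist q.1 q.2) p
            (mix ((s : ℝ) ^ p) ((Measure.dirac a).prod ν) Δ) :=
      eWp_le_of_isCoupling hp ((isCoupling_prod _ _).mix (isCoupling_diag α))
    _ = s * eLpNorm' (fun q => edist q.1 q.2) p ((Measure.dirac a).prod ν) :=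
      eLpNorm'_mix_of_right_ae_eq_zero hp hΔ
    _ = s * momentNorm p a ν := by
      rw [Measure.dirac_prod, momentNorm, eLpNorm', eLpNorm', lintegral_map (by fun_prop)
        (by fun_prop)]

lemma eWp_spike_spike_le (hp : 0 < p) (hs : s ≤ 1) (a b : X) [IsProbabilityMeasure α] :
    eWp p (spike p s a α) (spike p s b α) ≤ s * edist a b :=
  (eWp_spike_mix_le hp hs a).trans_eq (by rw [momentNorm_dirac hp])

lemma eWp_spike_self_le (hp : 0 < p) (hs : s ≤ 1) (a : X) [IsProbabilityMeasure α] :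
    eWp p (spike p s a α) α ≤ s * momentNorm p a α := by
  simpa only [mix_self (by positivity) (coe_rpow_le_one hp.le hs)] using
    eWp_spike_mix_le hp hs a (ν := α) (α := α)

/-- The witness is the cone `x ↦ r - edist a x`: at the atom `a` it has height `r`, it vanishes at
`b`, and it is supported where `edist z x ≥ r`. -/
lemma mul_le_eWp_spike_add_momentNorm_restrict (hp : 1 ≤ p) {z a b : X} {r : ℝ≥0∞}
    (ha : 2 * r ≤ edist z a) (hab : r ≤ edist a b) :
    s * r ≤ eWp p (spike p s a ν) (spike p s b α) +
      momentNorm p z (α.restrict {x | r ≤ edist z x}) := by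
  have hp' : 0 < p := by linarith
  set cone : X → ℝ≥0∞ := fun x => r - edist a x
  have hcone : Measurable cone := measurable_const.sub measurable_edist_right
  have hlip (x y : X) : cone x ≤ cone y + edist x y := by
    rw [tsub_le_iff_left, add_comm, add_assoc]
    calc
      r ≤ cone y + edist a y := le_tsub_add
      _ ≤ cone y + (edist x y + edist a x) := by
        gcongr
        rw [add_comm]; exact edist_triangle a x y
  have hcone_b : cone =ᵐ[Measure.dirac b] 0 :=
    (ae_dirac_iff (measurableSet_eq_fun hcone measurable_const)).2 (tsub_eq_zero_of_le hab)
  have hS : MeasurableSet {x | r ≤ edist z x} := measurableSet_le measurable_const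
    measurable_edist_right
  calc
    s * r = s * eLpNorm' cone p (Measure.dirac a) := by
      rw [eLpNorm', lintegral_dirac' _ (hcone.enorm.pow_const p), one_div,
        ENNReal.rpow_rpow_inv hp'.ne']
      simp [cone]
    _ ≤ eLpNorm' cone p (spike p s a ν) := mul_eLpNorm'_le_eLpNorm'_mix hp' s _
    _ ≤ eLpNorm' cone p (spike p s b α) + eWp p (spike p s a ν) (spike p s b α) :=
      eLpNorm'_le_add_eWp hp hcone hlip
    _ ≤ eLpNorm' cone p α + eWp p (spike p s a ν) (spike p s b α) :=
      add_le_add_left (eLpNorm'_mix_le_of_left_ae_eq_zero hp' (by positivity) hcone_b) _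
    _ ≤ eLpNorm' ({x | r ≤ edist z x}.indicator (edist z)) p α +
          eWp p (spike p s a ν) (spike p s b α) :=
      add_le_add_left (eLpNorm'_mono_enorm_ae hp'.le (.of_forall (tsub_edist_le_indicator ha))) _
    _ = _ := by
      rw [add_comm, eLpNorm'_indicator hp' hS, momentNorm]

end Spikes

section WeakTopology

variable [MetricSpace X] [MeasurableSpace X] {p : ℝ}

lemma exists_probabilityMeasure_of_weakConv {μs : ℕ → ProbabilityMeasure X} {ν : Measure X}
    (h : WeakConv (fun n => (μs n : Measure X)) ν) :
    ∃ ν' : ProbabilityMeasure X, (ν' : Measure X) = ν := by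
  have h1 := h (BoundedContinuousFunction.const X 1)
  simp only [BoundedContinuousFunction.const_apply, integral_const, probReal_univ, smul_eq_mul,
    mul_one] at h1
  have hν : ν.real univ = 1 := tendsto_nhds_unique h1 tendsto_const_nhds
  exact ⟨⟨ν, ⟨(ENNReal.toReal_eq_one_iff _).1 hν⟩⟩, rfl⟩

variable [BorelSpace X]

lemma weakConv_coe_iff_tendsto {μs : ℕ → ProbabilityMeasure X} {ν : ProbabilityMeasure X} :
    WeakConv (fun n => (μs n : Measure X)) ν ↔ Tendsto μs atTop (𝓝 ν) :=
  ProbabilityMeasure.tendsto_iff_forall_integral_tendsto.symm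

variable [SecondCountableTopology X]

lemma enorm_integral_sub_integral_div_le_eWp (hp : 1 ≤ p) {μ ν : Measure X} {g : X → ℝ} {L : ℝ≥0}
    (hg : LipschitzWith L g) (hgμ : Integrable g μ) (hgν : Integrable g ν) :
    ‖∫ x, g x ∂μ - ∫ x, g x ∂ν‖ₑ / L ≤ eWp p μ ν := by
  refine (le_eWp_iff (by linarith)).2 fun π _ hπ => ENNReal.div_le_of_le_mul' ?_
  have hμ : ∫ x, g x ∂μ = ∫ q, g q.1 ∂π := by
    rw [← hπ.1, integral_map measurable_fst.aemeasurable hg.continuous.aestronglyMeasurable]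
  have hν : ∫ x, g x ∂ν = ∫ q, g q.2 ∂π := by
    rw [← hπ.2, integral_map measurable_snd.aemeasurable hg.continuous.aestronglyMeasurable]
  have hπμ : Integrable (fun q => g q.1) π := by
    rw [← hπ.1] at hgμ; exact hgμ.comp_measurable measurable_fst
  have hπν : Integrable (fun q => g q.2) π := by
    rw [← hπ.2] at hgν; exact hgν.comp_measurable measurable_snd
  calc
    ‖∫ x, g x ∂μ - ∫ x, g x ∂ν‖ₑ = ‖∫ q, (g q.1 - g q.2) ∂π‖ₑ := by
      rw [hμ, hν, integral_sub hπμ hπν]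
    _ ≤ ∫⁻ q, ‖g q.1 - g q.2‖ₑ ∂π := enorm_integral_le_lintegral_enorm _
    _ ≤ ∫⁻ q, L * edist q.1 q.2 ∂π :=
      lintegral_mono fun q => (edist_eq_enorm_sub (g q.1) (g q.2)).symm.trans_le (hg q.1 q.2)
    _ = L * eLpNorm' (fun q => edist q.1 q.2) 1 π := by
      rw [lintegral_const_mul _ (by fun_prop), eLpNorm']
      simp
    _ ≤ L * eLpNorm' (fun q => edist q.1 q.2) p π := by
      gcongr
      exact eLpNorm'_le_eLpNorm'_of_exponent_le one_pos hp π (by fun_prop)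

lemma tendsto_of_tendsto_eWp (hp : 1 ≤ p) {μs : ℕ → ProbabilityMeasure X}
    {μ : ProbabilityMeasure X}
    (h : Tendsto (fun n => eWp p (μs n : Measure X) μ) atTop (𝓝 0)) :
    Tendsto μs atTop (𝓝 μ) := by
  rw [tendsto_iff_forall_lipschitz_integral_tendsto]
  rintro g ⟨C, hC⟩ ⟨L, hL⟩
  have hint (ν : ProbabilityMeasure X) : Integrable g ν := by
    obtain ⟨z⟩ := ν.nonempty
    refine Integrable.of_bound hL.continuous.aestronglyMeasurable (C + ‖g z‖)
      (.of_forall fun x => ?_)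
    linarith [norm_sub_norm_le (g x) (g z), dist_eq_norm (g x) (g z) ▸ hC x z]
  have hdiv : Tendsto (fun n => ‖∫ x, g x ∂(μs n) - ∫ x, g x ∂μ‖ₑ / (L + 1 : ℝ≥0)) atTop (𝓝 0) :=
    tendsto_of_tendsto_of_tendsto_of_le_of_le tendsto_const_nhds h (fun _ => zero_le) fun n =>
      enorm_integral_sub_integral_div_le_eWp hp (hL.weaken le_self_add) (hint _) (hint _)
  have hmul := ENNReal.Tendsto.mul_const (b := ((L + 1 : ℝ≥0) : ℝ≥0∞)) hdiv
    (.inr ENNReal.coe_ne_top)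
  simp only [zero_mul] at hmul
  rw [tendsto_iff_edist_tendsto_0]
  refine hmul.congr fun n => ?_
  rw [edist_eq_enorm_sub, ENNReal.div_mul_cancel (by simp) ENNReal.coe_ne_top]

lemma isClosed_momentNorm_le (hp : 0 < p) (z : X) (c : ℝ≥0∞) :
    IsClosed {μ : ProbabilityMeasure X | momentNorm p z μ ≤ c} := by
  have hcont : Continuous fun x => dist z x ^ p :=
    (continuous_const.dist continuous_id).rpow_const fun _ => .inr hp.le
  refine IsSeqClosed.isClosed fun μs μ hμs hμ => ?_
  simp only [momentNorm, eLpNorm', one_div, ENNReal.rpow_inv_le_iff hp, enorm_eq_self,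
    ← ofReal_dist_rpow hp.le, Set.mem_ofPred_eq] at hμs ⊢
  calc
    ∫⁻ x, ENNReal.ofReal (dist z x ^ p) ∂μ
        ≤ atTop.liminf fun n => ∫⁻ x, ENNReal.ofReal (dist z x ^ p) ∂(μs n) :=
      lintegral_le_liminf_lintegral_of_forall_isOpen_measure_le_liminf_measure hcont
        (fun x => by positivity)
        fun G hG => ProbabilityMeasure.le_liminf_measure_open_of_tendsto hμ hG
    _ ≤ c ^ p := liminf_le_of_frequently_le' (.of_forall hμs)

lemma measure_setOf_le_edist_le (hp : 0 < p) (μ : Measure X) (z : X) {r : ℝ≥0∞}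
    (hr : r ≠ 0) (hr' : r ≠ ⊤) : μ {x | r ≤ edist z x} ≤ (momentNorm p z μ / r) ^ p := by
  have hmarkov := meas_ge_le_lintegral_div (μ := μ) (f := fun x => edist z x ^ p) (by fun_prop)
    (ENNReal.rpow_pos_of_nonneg (pos_iff_ne_zero.2 hr) hp.le).ne'
    (ENNReal.rpow_ne_top_of_nonneg hp.le hr')
  simpa only [ENNReal.rpow_le_rpow_iff hp, ENNReal.div_rpow_of_nonneg _ _ hp.le, momentNorm,
    eLpNorm', enorm_eq_self, one_div, ENNReal.rpow_inv_rpow hp.ne'] using hmarkov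

lemma isCompact_momentNorm_le [ProperSpace X] (hp : 0 < p) (z : X) (c : ℝ≥0) :
    IsCompact {μ : ProbabilityMeasure X | momentNorm p z μ ≤ c} := by
  rw [← (isClosed_momentNorm_le hp z c).closure_eq]
  apply isCompact_closure_of_isTightMeasureSet
  rw [isTightMeasureSet_iff_exists_isCompact_measure_compl_le]
  intro ε hε
  have htail : Tendsto (fun r : ℕ => ((c : ℝ≥0∞) / r) ^ p) atTop (𝓝 0) := by
    have := ENNReal.Tendsto.const_div (a := (c : ℝ≥0∞)) ENNReal.tendsto_nat_nhds_top
      (.inr ENNReal.coe_ne_top)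
    rw [ENNReal.div_top] at this
    simpa only [ENNReal.zero_rpow_of_pos hp] using this.ennrpow_const p
  obtain ⟨r, hrε, hr⟩ := ((htail.eventually (gt_mem_nhds hε)).and (eventually_gt_atTop 0)).exists
  refine ⟨closedBall z r, isCompact_closedBall z r, ?_⟩
  rintro _ ⟨μ, hμ, rfl⟩
  calc
    (μ : Measure X) (closedBall z r)ᶜ ≤ (μ : Measure X) {x | (r : ℝ≥0∞) ≤ edist z x} := by
      refine measure_mono fun x hx => ?_
      rw [mem_compl_iff, mem_closedBall', not_le] at hx
      rw [Set.mem_ofPred_eq, edist_dist, ← ENNReal.ofReal_natCast]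
      exact ENNReal.ofReal_le_ofReal hx.le
    _ ≤ (momentNorm p z μ / r) ^ p :=
      measure_setOf_le_edist_le hp _ z (by exact_mod_cast hr.ne') (by simp)
    _ ≤ (c / r) ^ p := by gcongr; exact hμ
    _ ≤ ε := hrε.le

end WeakTopology

section MarkovOperator

open ProbabilityTheory

variable [MeasurableSpace X] {κ : Kernel X X} [IsMarkovKernel κ]

/-- The action `μ ↦ μ.bind κ` of a Markov kernel on the space of probability measures. -/
def markovMap (κ : Kernel X X) [IsMarkovKernel κ] (μ : ProbabilityMeasure X) :
    ProbabilityMeasure X :=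
  ⟨(μ : Measure X).bind κ, inferInstance⟩

/-- A Markov kernel as a map into the space of probability measures; its continuity is the Feller
property of the kernel. -/
def kernelMap (κ : Kernel X X) [IsMarkovKernel κ] (x : X) : ProbabilityMeasure X :=
  ⟨κ x, inferInstance⟩

lemma semiconj_coe_markovMap :
    Function.Semiconj ((↑) : ProbabilityMeasure X → Measure X) (markovMap κ) fun μ => μ.bind κ :=
  fun _ => rfl

lemma bind_iterate_eq_bind_pow (κ : Kernel X X) (k : ℕ) (μ : Measure X) :
    (fun μ : Measure X => μ.bind κ)^[k] μ = μ.bind (κ ^ k : Kernel X X) := by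
  induction k with
  | zero => exact Measure.id_comp.symm
  | succ k ih =>
    rw [Function.iterate_succ_apply', ih, pow_succ']
    exact Measure.comp_assoc

lemma isMarkovKernel_pow (κ : Kernel X X) [IsMarkovKernel κ] (k : ℕ) :
    IsMarkovKernel (κ ^ k : Kernel X X) := by
  induction k with
  | zero => exact inferInstanceAs (IsMarkovKernel Kernel.id)
  | succ k ih =>
    rw [pow_succ']
    exact inferInstanceAs (IsMarkovKernel (κ ∘ₖ (κ ^ k : Kernel X X)))

/-- The average of the first `n + 1` points of the `F`-orbit of `μ`. -/
def orbitAverage (F : ProbabilityMeasure X → ProbabilityMeasure X) (n : ℕ)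
    (μ : ProbabilityMeasure X) : ProbabilityMeasure X :=
  ⟨((n + 1 : ℕ) : ℝ≥0∞)⁻¹ • ∑ i ∈ Finset.range (n + 1), (F^[i] μ : Measure X), by
    constructor
    simp only [Measure.smul_apply, Measure.finsetSum_apply, measure_univ, smul_eq_mul,
      Finset.sum_const, Finset.card_range, nsmul_eq_mul, mul_one]
    exact ENNReal.inv_mul_cancel (by simp) (by finiteness)⟩

variable {F : ProbabilityMeasure X → ProbabilityMeasure X} {n : ℕ} {μ : ProbabilityMeasure X}

lemma lintegral_orbitAverage (g : X → ℝ≥0∞) :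
    ∫⁻ x, g x ∂(orbitAverage F n μ) =
      ((n + 1 : ℕ) : ℝ≥0∞)⁻¹ * ∑ i ∈ Finset.range (n + 1), ∫⁻ x, g x ∂(F^[i] μ) := by
  rw [orbitAverage, ProbabilityMeasure.coe_mk, lintegral_smul_measure,
    lintegral_finsetSum_measure, smul_eq_mul]

lemma integral_orbitAverage {g : X → ℝ} (hg : ∀ ν : ProbabilityMeasure X, Integrable g ν) :
    ∫ x, g x ∂(orbitAverage F n μ) =
      birkhoffAverage ℝ F (fun ν => ∫ x, g x ∂ν) (n + 1) μ := by
  rw [orbitAverage, ProbabilityMeasure.coe_mk, integral_smul_measure,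
    integral_finsetSum_measure fun i _ => hg _, birkhoffAverage, birkhoffSum,
    ENNReal.toReal_inv, ENNReal.toReal_natCast]

lemma markovMap_orbitAverage :
    markovMap κ (orbitAverage (markovMap κ) n μ) =
      orbitAverage (markovMap κ) n (markovMap κ μ) := by
  refine ProbabilityMeasure.toMeasure_injective (Measure.ext fun s hs => ?_)
  have hbind (ν : ProbabilityMeasure X) :
      (markovMap κ ν : Measure X) s = ∫⁻ x, κ x s ∂ν :=
    Measure.bind_apply hs κ.aemeasurable
  rw [hbind, lintegral_orbitAverage, ← lintegral_indicator_one hs, lintegral_orbitAverage]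
  simp only [← hbind, lintegral_indicator_one hs, ← Function.iterate_succ_apply',
    ← Function.iterate_succ_apply]

lemma momentNorm_orbitAverage_le {Y : Type*} [MetricSpace Y] [MeasurableSpace Y]
    {F : ProbabilityMeasure Y → ProbabilityMeasure Y} {μ : ProbabilityMeasure Y} {p : ℝ}
    (hp : 0 < p) {z : Y} {c : ℝ≥0∞} (h : ∀ i, momentNorm p z (F^[i] μ : Measure Y) ≤ c) :
    momentNorm p z (orbitAverage F n μ : Measure Y) ≤ c := by
  simp only [momentNorm, eLpNorm', one_div, ENNReal.rpow_inv_le_iff hp] at h ⊢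
  calc
    ∫⁻ y, ‖edist z y‖ₑ ^ p ∂(orbitAverage F n μ)
        = ((n + 1 : ℕ) : ℝ≥0∞)⁻¹ * ∑ i ∈ Finset.range (n + 1), ∫⁻ y, ‖edist z y‖ₑ ^ p ∂(F^[i] μ) :=
      lintegral_orbitAverage _
    _ ≤ ((n + 1 : ℕ) : ℝ≥0∞)⁻¹ * ∑ _i ∈ Finset.range (n + 1), c ^ p := by gcongr; exact h _
    _ = c ^ p := by
      rw [Finset.sum_const, Finset.card_range, nsmul_eq_mul, ← mul_assoc,
        ENNReal.inv_mul_cancel (by simp) (by finiteness), one_mul]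

variable [TopologicalSpace X] [OpensMeasurableSpace X]

lemma integral_markovMap (g : BoundedContinuousFunction X ℝ) :
    ∫ x, g x ∂(markovMap κ μ) = ∫ x, ∫ y, g y ∂κ x ∂μ := by
  have hcomp : (κ ∘ₖ Kernel.const Unit (μ : Measure X)) () = markovMap κ μ := by
    rw [Kernel.comp_apply, Kernel.const_apply]; rfl
  rw [← hcomp, Kernel.integral_comp (hcomp ▸ g.integrable _), Kernel.const_apply]

lemma continuous_markovMap (hκ : Continuous (kernelMap κ)) : Continuous (markovMap κ) := by
  refine continuous_iff_continuousAt.2 fun μ => ?_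
  refine ProbabilityMeasure.tendsto_iff_forall_integral_tendsto.2 fun g => ?_
  have hcont : Continuous fun x => ∫ y, g y ∂κ x := continuous_iff_continuousAt.2 fun x =>
    ProbabilityMeasure.tendsto_iff_forall_integral_tendsto.1 (hκ.tendsto x) g
  have hbdd (x : X) : ‖∫ y, g y ∂κ x‖ ≤ ‖g‖ := by
    simpa using norm_integral_le_of_norm_le_const (μ := κ x) (.of_forall g.norm_coe_le_norm)
  have htendsto := ProbabilityMeasure.tendsto_iff_forall_integral_tendsto.1
    (tendsto_id (x := 𝓝 μ)) (.ofNormedAddCommGroup _ hcont ‖g‖ hbdd)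
  simpa only [integral_markovMap, BoundedContinuousFunction.coe_ofNormedAddCommGroup, id]
    using htendsto

/-- The **Krylov–Bogoliubov** argument: `markovMap κ` moves the orbit averages by `O(1/n)`. -/
lemma exists_isFixedPt_of_orbitAverage_mem {Y : Type*} [MetricSpace Y] [MeasurableSpace Y]
    [BorelSpace Y] [SecondCountableTopology Y] {κ : Kernel Y Y} [IsMarkovKernel κ]
    (hκ : Continuous (markovMap κ)) {N : Set (ProbabilityMeasure Y)} (hN : IsCompact N)
    {μ : ProbabilityMeasure Y} (hμ : ∀ n, orbitAverage (markovMap κ) n μ ∈ N) :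
    ∃ ν ∈ N, Function.IsFixedPt (markovMap κ) ν := by
  obtain ⟨ν, hν, φ, hφ, hlim⟩ := hN.tendsto_subseq hμ
  refine ⟨ν, hν, tendsto_nhds_unique ((hκ.tendsto ν).comp hlim) ?_⟩
  rw [ProbabilityMeasure.tendsto_iff_forall_integral_tendsto] at hlim ⊢
  intro g
  have hint (ν : ProbabilityMeasure Y) : Integrable g ν := g.integrable _
  have hbdd : Bornology.IsBounded (range fun i => ∫ y, g y ∂((markovMap κ)^[i] μ)) := by
    refine isBounded_iff_forall_norm_le.2 ⟨‖g‖, forall_mem_range.2 fun i => ?_⟩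
    exact g.norm_integral_le_norm _
  have hdiff := (tendsto_birkhoffAverage_apply_sub_birkhoffAverage ℝ
    (g := fun ν : ProbabilityMeasure Y => ∫ y, g y ∂ν) hbdd).comp
    ((tendsto_add_atTop_nat 1).comp hφ.tendsto_atTop)
  have hsum := (hlim g).add hdiff
  rw [add_zero] at hsum
  refine hsum.congr fun n => ?_
  simp only [Function.comp_apply, markovMap_orbitAverage, integral_orbitAverage hint]
  ring

end MarkovOperator

section MarkovMoment

open ProbabilityTheory

variable [MetricSpace X] [MeasurableSpace X] [BorelSpace X] {p : ℝ}

lemma eLpNorm'_const_mul_edist (hp : 0 < p) (A : ℝ≥0∞) (z : X) (μ : Measure X) :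
    eLpNorm' (fun x => A * edist z x) p μ = A * momentNorm p z μ := by
  simp only [momentNorm, eLpNorm', enorm_eq_self, ENNReal.mul_rpow_of_nonneg _ _ hp.le]
  rw [lintegral_const_mul _ (measurable_edist_right.pow_const p),
    ENNReal.mul_rpow_of_nonneg _ _ (by positivity), one_div, ENNReal.rpow_rpow_inv hp.ne']

lemma momentNorm_bind_le (hp : 1 ≤ p) {κ : Kernel X X} {z w : X} {A B : ℝ≥0∞}
    (h : ∀ x, momentNorm p w (κ x) ≤ A * edist z x + B) (μ : Measure X) [IsProbabilityMeasure μ] :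
    momentNorm p w (μ.bind κ) ≤ A * momentNorm p z μ + B := by
  have hp' : 0 < p := by linarith
  have hA : Measurable fun x => A * edist z x := measurable_edist_right.const_mul A
  calc
    momentNorm p w (μ.bind κ) = (∫⁻ x, momentNorm p w (κ x) ^ p ∂μ) ^ (1 / p) := by
      simp only [momentNorm, eLpNorm', one_div, ENNReal.rpow_inv_rpow hp'.ne']
      rw [Measure.lintegral_bind κ.aemeasurable
        (measurable_edist_right.enorm.pow_const p).aemeasurable]
    _ ≤ eLpNorm' ((fun x => A * edist z x) + fun _ => B) p μ := by
      simp only [eLpNorm', enorm_eq_self]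
      gcongr with x
      exact h x
    _ ≤ eLpNorm' (fun x => A * edist z x) p μ + eLpNorm' (fun _ => B) p μ :=
      eLpNorm'_add_le hA.aestronglyMeasurable aestronglyMeasurable_const hp
    _ = A * momentNorm p z μ + B := by
      rw [eLpNorm'_const_mul_edist hp', eLpNorm'_const_of_isProbabilityMeasure _ hp',
        enorm_eq_self]

end MarkovMoment

section InvariantSets

variable {Y Z : Type*} {g : Y → Y} {N : Set Y} {y : Y}

lemma PosInvariant.iterate_mem (hN : PosInvariant g N) (hy : y ∈ N) (k : ℕ) : g^[k] y ∈ N :=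
  MapsTo.iterate hN k hy

lemma PosInvariant.mem_maxInv (hN : PosInvariant g N) (hy : FullLeftSolution g N y) :
    y ∈ maxInv g N := by
  have hyN : y ∈ N := by
    obtain ⟨u, rfl, -, hu⟩ := hy
    exact hu 0
  exact ⟨⟨hyN, hN.iterate_mem hyN⟩, hyN, hy⟩

lemma mem_maxInv_of_isFixedPt (hN : PosInvariant g N) (hyN : y ∈ N)
    (hy : Function.IsFixedPt g y) : y ∈ maxInv g N :=
  hN.mem_maxInv ⟨fun _ => y, rfl, fun _ => hy, fun _ => hyN⟩

lemma PosInvariant.image {i : Y → Z} {P : Z → Z} (hN : PosInvariant g N)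
    (h : Function.Semiconj i g P) : PosInvariant P (i '' N) := by
  rintro _ ⟨y, hy, rfl⟩
  exact ⟨g y, hN y hy, h y⟩

lemma FullLeftSolution.of_image {i : Y → Z} {P : Z → Z} (hi : Function.Injective i)
    (h : Function.Semiconj i g P) (hy : FullLeftSolution P (i '' N) (i y)) :
    FullLeftSolution g N y := by
  obtain ⟨u, hu0, hustep, hu⟩ := hy
  choose v hvN hv using hu
  refine ⟨v, hi ((hv 0).trans hu0), fun k => hi ?_, hvN⟩
  rw [h, hv, hv, hustep]

lemma PosInvariant.maxInv_image {i : Y → Z} {P : Z → Z} (hN : PosInvariant g N)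
    (hi : Function.Injective i) (h : Function.Semiconj i g P) :
    maxInv P (i '' N) = i '' maxInv g N := by
  ext z
  constructor
  · rintro ⟨⟨⟨y, -, rfl⟩, -⟩, -, hy⟩
    exact mem_image_of_mem i (hN.mem_maxInv (hy.of_image hi h))
  · rintro ⟨y, ⟨-, -, u, hu0, hustep, hu⟩, rfl⟩
    exact (hN.image h).mem_maxInv
      ⟨i ∘ u, congrArg i hu0,
        fun k => by simp only [Function.comp_apply, ← hustep k, h (u (k + 1))],
        fun k => mem_image_of_mem i (hu k)⟩

variable [TopologicalSpace Y] [T2Space Y]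

lemma exists_preimage_mem_iInter_iterate_image (hg : Continuous g) (hN : IsCompact N)
    (hinv : PosInvariant g N) (hy : y ∈ ⋂ j, g^[j] '' N) : ∃ x ∈ ⋂ j, g^[j] '' N, g x = y := by
  have hcpt (j : ℕ) : IsCompact (g^[j] '' N) := hN.image (hg.iterate j)
  have hfibre : IsClosed (g ⁻¹' {y}) := isClosed_singleton.preimage hg
  have hanti (j : ℕ) : g^[j + 1] '' N ⊆ g^[j] '' N := by
    rintro _ ⟨w, hw, rfl⟩
    exact ⟨g w, hinv w hw, (Function.iterate_succ_apply g j w).symm⟩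
  have hne (j : ℕ) : (g^[j] '' N ∩ g ⁻¹' {y}).Nonempty := by
    obtain ⟨w, hw, hwy⟩ := mem_iInter.1 hy (j + 1)
    rw [Function.iterate_succ_apply'] at hwy
    exact ⟨g^[j] w, mem_image_of_mem _ hw, hwy⟩
  obtain ⟨x, hx⟩ := IsCompact.nonempty_iInter_of_sequence_nonempty_isCompact_isClosed _
    (fun j => inter_subset_inter_left (g ⁻¹' {y}) (hanti j)) hne ((hcpt 0).inter_right hfibre)
    fun j => (hcpt j).isClosed.inter hfibre
  rw [← iInter_inter] at hx
  exact ⟨x, hx.1, hx.2⟩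

lemma maxInv_eq_iInter_iterate_image (hg : Continuous g) (hN : IsCompact N)
    (hinv : PosInvariant g N) : maxInv g N = ⋂ j, g^[j] '' N := by
  refine Subset.antisymm ?_ fun y hy => hinv.mem_maxInv ?_
  · rintro y ⟨-, -, u, rfl, hustep, hu⟩
    have hiter (j : ℕ) : g^[j] (u j) = u 0 := by
      induction j with
      | zero => rfl
      | succ j ih => rw [Function.iterate_succ_apply, hustep, ih]
    exact mem_iInter.2 fun j => ⟨u j, hu j, hiter j⟩
  · have hback (x : ⋂ j, g^[j] '' N) : ∃ x' : ⋂ j, g^[j] '' N, g x' = x :=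
      let ⟨x', hx', h⟩ := exists_preimage_mem_iInter_iterate_image hg hN hinv x.2
      ⟨⟨x', hx'⟩, h⟩
    choose s hs using hback
    refine ⟨fun k => s^[k] ⟨y, hy⟩, rfl, fun k => ?_, fun k => ?_⟩
    · simp only [Function.iterate_succ_apply', hs]
    · simpa only [Function.iterate_zero, image_id] using mem_iInter.1 (s^[k] ⟨y, hy⟩).2 0

lemma isCompact_maxInv (hg : Continuous g) (hN : IsCompact N) (hinv : PosInvariant g N) :
    IsCompact (maxInv g N) := by
  rw [maxInv_eq_iInter_iterate_image hg hN hinv]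
  exact hN.of_isClosed_subset (isClosed_iInter fun j => (hN.image (hg.iterate j)).isClosed)
    (iInter_subset_of_subset 0 (image_id N).subset)

lemma mem_maxInv_of_tendsto_iterate (hg : Continuous g) (hN : IsCompact N)
    (hinv : PosInvariant g N) {u : ℕ → Y} {m : ℕ → ℕ} (hu : ∀ n, u n ∈ N)
    (hm : Tendsto m atTop atTop) (hlim : Tendsto (fun n => g^[m n] (u n)) atTop (𝓝 y)) :
    y ∈ maxInv g N := by
  rw [maxInv_eq_iInter_iterate_image hg hN hinv, mem_iInter]
  refine fun j => (hN.image (hg.iterate j)).isClosed.mem_of_tendsto hlim ?_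
  filter_upwards [hm.eventually_ge_atTop j] with n hn
  refine ⟨g^[m n - j] (u n), hinv.iterate_mem (hu n) _, ?_⟩
  rw [← Function.iterate_add_apply, Nat.add_sub_cancel' hn]

end InvariantSets

section Drift

variable {Y : Type*} {g : Y → Y} {m : Y → ℝ≥0∞} {a R : ℝ≥0∞} {k : ℕ}

/-- The points whose whole forward orbit stays in the sublevel set `{m ≤ R}`. -/
def orbitSublevel (g : Y → Y) (m : Y → ℝ≥0∞) (R : ℝ≥0∞) : Set Y := {y | ∀ j, m (g^[j] y) ≤ R}

lemma posInvariant_orbitSublevel : PosInvariant g (orbitSublevel g m R) :=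
  fun _ hy j => hy (j + 1)

lemma orbitSublevel_subset : orbitSublevel g m R ⊆ {y | m y ≤ R} := fun _ hy => hy 0

lemma isClosed_orbitSublevel [TopologicalSpace Y] (hg : Continuous g)
    (hm : IsClosed {y | m y ≤ R}) : IsClosed (orbitSublevel g m R) := by
  simp only [orbitSublevel, ofPred_forall]
  exact isClosed_iInter fun j => hm.preimage (hg.iterate j)

lemma apply_iterate_mul_le_of_drift (ha : a ≤ 1)
    (h : ∀ y, m (g^[k] y) ≤ a * m y + (1 - a) * R) (y : Y) (j : ℕ) :
    m (g^[k * j] y) ≤ a ^ j * m y + R := by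
  induction j with
  | zero => simp
  | succ j ih =>
    calc
      m (g^[k * (j + 1)] y) = m (g^[k] (g^[k * j] y)) := by
        rw [← Function.iterate_add_apply, Nat.mul_succ, Nat.add_comm]
      _ ≤ a * (a ^ j * m y + R) + (1 - a) * R := (h _).trans (by gcongr)
      _ = a ^ (j + 1) * m y + (a + (1 - a)) * R := by ring
      _ = a ^ (j + 1) * m y + R := by rw [add_tsub_cancel_of_le ha, one_mul]

lemma apply_le_of_drift_of_bounded_leftSolution (ha : a < 1)
    (h : ∀ y, m (g^[k] y) ≤ a * m y + (1 - a) * R) {u : ℕ → Y} (hu : ∀ n, g (u (n + 1)) = u n)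
    {M : ℝ≥0∞} (hM : M ≠ ⊤) (hbdd : ∀ n, m (u n) ≤ M) (n : ℕ) : m (u n) ≤ R := by
  have hiter (i : ℕ) : g^[i] (u (n + i)) = u n := by
    induction i with
    | zero => rfl
    | succ i ih => rw [Function.iterate_succ_apply, ← Nat.add_assoc, hu, ih]
  have hle (j : ℕ) : m (u n) ≤ a ^ j * M + R := by
    rw [← hiter (k * j)]
    refine (apply_iterate_mul_le_of_drift ha.le h _ j).trans ?_
    gcongr
    exact hbdd _
  have hlim : Tendsto (fun j : ℕ => a ^ j * M + R) atTop (𝓝 (0 * M + R)) :=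
    (ENNReal.Tendsto.mul_const (ENNReal.tendsto_pow_atTop_nhds_zero_of_lt_one ha)
      (.inr hM)).add_const R
  simpa only [zero_mul, zero_add] using ge_of_tendsto' hlim hle

lemma exists_sublevel_subset_orbitSublevel (ha : a ≤ 1) (hR : R ≠ ⊤) (hk : 0 < k)
    (h : ∀ y, m (g^[k] y) ≤ a * m y + (1 - a) * R)
    (hbdd : ∀ r : ℝ≥0, ∃ r' : ℝ≥0, ∀ y, m y ≤ r → m (g y) ≤ r') (r : ℝ≥0) :
    ∃ r' : ℝ≥0, {y | m y ≤ r} ⊆ orbitSublevel g m r' := by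
  choose ρ hρ using hbdd
  have hiter (y : Y) (hy : m y ≤ r) (i : ℕ) : m (g^[i] y) ≤ ρ^[i] r := by
    induction i with
    | zero => exact hy
    | succ i ih => simpa only [Function.iterate_succ_apply'] using hρ _ _ ih
  refine ⟨(∑ i ∈ Finset.range k, ρ^[i] r) + R.toNNReal, fun y hy j => ?_⟩
  rw [ENNReal.coe_add, ENNReal.coe_toNNReal hR]
  have hmod : ρ^[j % k] r ≤ ∑ i ∈ Finset.range k, ρ^[i] r :=
    Finset.single_le_sum (f := fun i => ρ^[i] r) (fun _ _ => zero_le)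
      (Finset.mem_range.2 (Nat.mod_lt j hk))
  calc
    m (g^[j] y) = m (g^[k * (j / k)] (g^[j % k] y)) := by
      rw [← Function.iterate_add_apply, Nat.div_add_mod]
    _ ≤ a ^ (j / k) * m (g^[j % k] y) + R := apply_iterate_mul_le_of_drift ha h _ _
    _ ≤ 1 * (∑ i ∈ Finset.range k, ρ^[i] r : ℝ≥0) + R := by
      gcongr
      · exact pow_le_one₀ zero_le ha
      · exact (hiter y hy _).trans (ENNReal.coe_le_coe.2 hmod)
    _ = _ := by rw [one_mul]

lemma mem_maxInv_orbitSublevel_of_bounded_leftSolution (ha : a < 1)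
    (h : ∀ y, m (g^[k] y) ≤ a * m y + (1 - a) * R) {R' : ℝ≥0∞}
    (hR' : {y | m y ≤ R} ⊆ orbitSublevel g m R') {u : ℕ → Y} (hu : ∀ n, g (u (n + 1)) = u n)
    {M : ℝ≥0∞} (hM : M ≠ ⊤) (hbdd : ∀ n, m (u n) ≤ M) :
    u 0 ∈ maxInv g (orbitSublevel g m R') :=
  posInvariant_orbitSublevel.mem_maxInv ⟨u, rfl, hu, fun n =>
    hR' (apply_le_of_drift_of_bounded_leftSolution ha h hu hM hbdd n)⟩

lemma apply_le_of_mem_maxInv_orbitSublevel (ha : a < 1)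
    (h : ∀ y, m (g^[k] y) ≤ a * m y + (1 - a) * R) {R' : ℝ≥0∞} (hR' : R' ≠ ⊤) {y : Y}
    (hy : y ∈ maxInv g (orbitSublevel g m R')) : m y ≤ R := by
  obtain ⟨-, -, u, rfl, hu, hmem⟩ := hy
  exact apply_le_of_drift_of_bounded_leftSolution ha h hu hR'
    (fun n => orbitSublevel_subset (hmem n)) 0

end Drift

section AttractorBlock

open ProbabilityTheory

variable [MetricSpace X] [MeasurableSpace X]

lemma exists_probabilityMeasure_of_mem_Pp {p : ℝ} {x₀ : X} {μ : Measure X} (hμ : μ ∈ Pp p x₀) :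
    ∃ μ' : ProbabilityMeasure X, (μ' : Measure X) = μ :=
  ⟨⟨μ, hμ.1⟩, rfl⟩

/-- `N` is a closed, positively invariant isolating neighbourhood in `(P_p(X), w_p)` whose maximal
`P`-invariant set is weakly compact, a weak attractor for `P`, contains all bounded full `P`-orbits
and contains a stationary measure. -/
structure IsWeakAttractorBlock (p : ℝ) (x₀ : X) (P : Measure X → Measure X)
    (N : Set (Measure X)) : Prop where
  wpClosed : WpClosed p x₀ N
  posInvariant : PosInvariant P N
  isolating : ∃ δ : ℝ, 0 < δ ∧
    {μ : Measure X | μ ∈ Pp p x₀ ∧ ∃ ν ∈ maxInv P N, Wp p μ ν < δ} ⊆ N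
  weakSeqCompact : WeakSeqCompact (maxInv P N)
  omegaWeakM_subset : omegaWeakM P N ⊆ maxInv P N
  mem_of_boundedOrbit : ∀ σ : ℤ → Measure X, (∀ k, σ k ∈ Pp p x₀) →
    (∀ k : ℤ, P (σ k) = σ (k + 1)) →
    (∃ R : ℝ, ∀ k : ℤ, Wp p (σ k) (Measure.dirac x₀) ≤ R) → σ 0 ∈ maxInv P N
  exists_fixedPt : ∃ μ ∈ maxInv P N, P μ = μ

/-- The probability measures whose whole forward orbit under `κ` has moments at most `R`. -/
def momentBlock (p : ℝ) (x₀ : X) (κ : Kernel X X) [IsMarkovKernel κ] (R : ℝ≥0∞) :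
    Set (ProbabilityMeasure X) :=
  orbitSublevel (markovMap κ) (fun μ => momentNorm p x₀ μ) R

variable {p : ℝ} {x₀ : X} {κ : Kernel X X} [IsMarkovKernel κ]

lemma maxInv_coe_momentBlock {R : ℝ≥0∞} :
    maxInv (fun μ : Measure X => μ.bind κ) ((↑) '' momentBlock p x₀ κ R) =
      (↑) '' maxInv (markovMap κ) (momentBlock p x₀ κ R) :=
  posInvariant_orbitSublevel.maxInv_image ProbabilityMeasure.toMeasure_injective
    semiconj_coe_markovMap

lemma coe_momentBlock_subset_Pp (hp : 0 < p) {R : ℝ≥0} :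
    ((↑) '' momentBlock p x₀ κ R : Set (Measure X)) ⊆ Pp p x₀ := by
  rintro _ ⟨μ, hμ, rfl⟩
  exact (mem_Pp_iff hp).2 ⟨inferInstance, ne_top_of_le_ne_top ENNReal.coe_ne_top (hμ 0)⟩

variable [BorelSpace X]

lemma weakSeqCompact_image_coe [SecondCountableTopology X] {K : Set (ProbabilityMeasure X)}
    (hK : IsCompact K) : WeakSeqCompact ((↑) '' K : Set (Measure X)) := by
  intro μs hμs
  choose νs hνs hcoe using hμs
  obtain ⟨ν, hν, φ, hφ, hlim⟩ := hK.tendsto_subseq hνs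
  refine ⟨ν, mem_image_of_mem _ hν, φ, hφ, ?_⟩
  obtain rfl : (fun n => (νs n : Measure X)) = μs := funext hcoe
  exact weakConv_coe_iff_tendsto.2 hlim

lemma tendsto_of_wpTendsto [SecondCountableTopology X] (hp : 1 ≤ p)
    {μs : ℕ → ProbabilityMeasure X} {μ : ProbabilityMeasure X}
    (hμs : ∀ n, (μs n : Measure X) ∈ Pp p x₀) (hμ : (μ : Measure X) ∈ Pp p x₀)
    (h : WpTendsto p (fun n => (μs n : Measure X)) μ) : Tendsto μs atTop (𝓝 μ) := by
  have hlim := ENNReal.tendsto_ofReal h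
  simp only [ofReal_Wp hp (hμs _) hμ, ENNReal.ofReal_zero] at hlim
  exact tendsto_of_tendsto_eWp hp hlim

lemma wpClosed_image_coe [SecondCountableTopology X] (hp : 1 ≤ p) {N : Set (ProbabilityMeasure X)}
    (hN : IsClosed N) (hsub : ((↑) '' N : Set (Measure X)) ⊆ Pp p x₀) :
    WpClosed p x₀ ((↑) '' N) := by
  refine ⟨hsub, fun μs μ hμs hμ hlim => ?_⟩
  choose νs hνs hcoe using hμs
  obtain rfl : (fun n => (νs n : Measure X)) = μs := funext hcoe
  obtain ⟨μ, rfl⟩ := exists_probabilityMeasure_of_mem_Pp hμ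
  exact mem_image_of_mem _ <| hN.mem_of_tendsto
    (tendsto_of_wpTendsto hp (fun n => hsub (mem_image_of_mem _ (hνs n))) hμ hlim)
    (.of_forall hνs)

variable [ProperSpace X] {R' : ℝ≥0}

lemma isCompact_momentBlock (hp : 0 < p) (hκ : Continuous (kernelMap κ)) :
    IsCompact (momentBlock p x₀ κ R') :=
  (isCompact_momentNorm_le hp x₀ R').of_isClosed_subset
    (isClosed_orbitSublevel (continuous_markovMap hκ) (isClosed_momentNorm_le hp x₀ R'))
    orbitSublevel_subset

lemma omegaWeakM_momentBlock_subset (hp : 0 < p) (hκ : Continuous (kernelMap κ)) :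
    omegaWeakM (fun μ : Measure X => μ.bind κ) ((↑) '' momentBlock p x₀ κ R') ⊆
      (↑) '' maxInv (markovMap κ) (momentBlock p x₀ κ R') := by
  rintro ν ⟨μs, m, hμs, hm, hlim⟩
  choose νs hνs hcoe using hμs
  obtain rfl : (fun n => (νs n : Measure X)) = μs := funext hcoe
  simp only [← (semiconj_coe_markovMap.iterate_right _).eq] at hlim
  obtain ⟨ν, rfl⟩ := exists_probabilityMeasure_of_weakConv hlim
  exact mem_image_of_mem _ <| mem_maxInv_of_tendsto_iterate (continuous_markovMap hκ)
    (isCompact_momentBlock hp hκ) posInvariant_orbitSublevel hνs hm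
    (weakConv_coe_iff_tendsto.1 hlim)

lemma exists_stationary_mem_momentBlock (hp : 0 < p) (hκ : Continuous (kernelMap κ))
    (hne : (momentBlock p x₀ κ R').Nonempty) :
    ∃ μ ∈ momentBlock p x₀ κ R', Function.IsFixedPt (markovMap κ) μ := by
  obtain ⟨μ, hμ⟩ := hne
  refine exists_isFixedPt_of_orbitAverage_mem (continuous_markovMap hκ)
    (isCompact_momentBlock hp hκ) (μ := μ) fun n j => ?_
  have hcomm : Function.Commute (markovMap κ) (orbitAverage (markovMap κ) n) :=
    fun _ => markovMap_orbitAverage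
  rw [(hcomm.iterate_left j).eq]
  refine momentNorm_orbitAverage_le hp fun i => ?_
  rw [← Function.iterate_add_apply]
  exact hμ (i + j)

section Drift

variable {k : ℕ} {a : ℝ≥0∞} {R : ℝ≥0}

lemma mem_momentBlock_of_Wp_lt_one (hp : 1 ≤ p) (ha : a < 1)
    (hdrift : ∀ μ : ProbabilityMeasure X, momentNorm p x₀ ((markovMap κ)^[k] μ : Measure X) ≤
      a * momentNorm p x₀ μ + (1 - a) * R)
    (hR' : {μ : ProbabilityMeasure X | momentNorm p x₀ μ ≤ (R + 1 : ℝ≥0)} ⊆ momentBlock p x₀ κ R')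
    {μ ν : ProbabilityMeasure X} (hμ : (μ : Measure X) ∈ Pp p x₀)
    (hν : ν ∈ maxInv (markovMap κ) (momentBlock p x₀ κ R')) (h : Wp p (μ : Measure X) ν < 1) :
    μ ∈ momentBlock p x₀ κ R' := by
  have hνR : momentNorm p x₀ ν ≤ R :=
    apply_le_of_mem_maxInv_orbitSublevel ha hdrift ENNReal.coe_ne_top hν
  have hνPp : (ν : Measure X) ∈ Pp p x₀ :=
    coe_momentBlock_subset_Pp (by linarith) (mem_image_of_mem _ hν.1.1)
  rw [Wp_lt_iff hp hμ hνPp, ENNReal.ofReal_one] at h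
  refine hR' ((momentNorm_le_add_eWp hp x₀ (ν := ν)).trans ?_)
  rw [ENNReal.coe_add]
  exact add_le_add hνR h.le

lemma mem_maxInv_of_boundedOrbit (hp : 1 ≤ p) (ha : a < 1)
    (hdrift : ∀ μ : ProbabilityMeasure X, momentNorm p x₀ ((markovMap κ)^[k] μ : Measure X) ≤
      a * momentNorm p x₀ μ + (1 - a) * R)
    (hR' : {μ : ProbabilityMeasure X | momentNorm p x₀ μ ≤ R} ⊆ momentBlock p x₀ κ R')
    {σ : ℤ → ProbabilityMeasure X} (hσ : ∀ k, (σ k : Measure X) ∈ Pp p x₀)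
    (hstep : ∀ k, markovMap κ (σ k) = σ (k + 1)) {M : ℝ}
    (hM : ∀ k, Wp p (σ k : Measure X) (Measure.dirac x₀) ≤ M) :
    σ 0 ∈ maxInv (markovMap κ) (momentBlock p x₀ κ R') := by
  refine mem_maxInv_orbitSublevel_of_bounded_leftSolution ha hdrift hR' (u := fun n => σ (-n))
    (fun n => ?_) (ENNReal.ofReal_ne_top (r := M)) fun n => ?_
  · rw [hstep]
    congr 1
    push_cast
    ring
  · rw [← ofReal_Wp_dirac hp (hσ _)]
    exact ENNReal.ofReal_le_ofReal (hM _)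

lemma isWeakAttractorBlock_momentBlock (hp : 1 ≤ p) (hκ : Continuous (kernelMap κ)) (ha : a < 1)
    (hdrift : ∀ μ : ProbabilityMeasure X, momentNorm p x₀ ((markovMap κ)^[k] μ : Measure X) ≤
      a * momentNorm p x₀ μ + (1 - a) * R)
    (hR' : {μ : ProbabilityMeasure X | momentNorm p x₀ μ ≤ (R + 1 : ℝ≥0)} ⊆
      momentBlock p x₀ κ R') :
    IsWeakAttractorBlock p x₀ (fun μ => μ.bind κ) ((↑) '' momentBlock p x₀ κ R') := by
  have hp' : 0 < p := by linarith
  have hcpt : IsCompact (momentBlock p x₀ κ R') := isCompact_momentBlock hp' hκ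
  have hinv : PosInvariant (markovMap κ) (momentBlock p x₀ κ R') := posInvariant_orbitSublevel
  have hsub : {μ : ProbabilityMeasure X | momentNorm p x₀ μ ≤ R} ⊆ momentBlock p x₀ κ R' :=
    fun μ hμ => hR' (le_trans hμ (ENNReal.coe_le_coe.2 le_self_add))
  refine ⟨wpClosed_image_coe hp hcpt.isClosed (coe_momentBlock_subset_Pp hp'),
    hinv.image semiconj_coe_markovMap, ⟨1, one_pos, ?_⟩, ?_, ?_, ?_, ?_⟩ <;>
    rw [maxInv_coe_momentBlock]
  · rintro μ ⟨hμ, _, ⟨ν, hν, rfl⟩, hlt⟩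
    obtain ⟨μ, rfl⟩ := exists_probabilityMeasure_of_mem_Pp hμ
    exact mem_image_of_mem _ (mem_momentBlock_of_Wp_lt_one hp ha hdrift hR' hμ hν hlt)
  · exact weakSeqCompact_image_coe (isCompact_maxInv (continuous_markovMap hκ) hcpt hinv)
  · exact omegaWeakM_momentBlock_subset hp' hκ
  · rintro σ hσ hstep ⟨M, hM⟩
    choose τ hτ using fun k => exists_probabilityMeasure_of_mem_Pp (hσ k)
    obtain rfl : (fun k => (τ k : Measure X)) = σ := funext hτ
    exact mem_image_of_mem _ <| mem_maxInv_of_boundedOrbit hp ha hdrift hsub hσ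
      (fun k => ProbabilityMeasure.toMeasure_injective (hstep k)) hM
  · obtain ⟨δ₀, hδ₀⟩ := exists_probabilityMeasure_of_mem_Pp (dirac_mem_Pp hp' x₀ x₀)
    have hmoment : momentNorm p x₀ (δ₀ : Measure X) ≤ R := by
      rw [hδ₀, momentNorm_dirac hp', edist_self]
      exact zero_le
    obtain ⟨μ, hμ, hfix⟩ := exists_stationary_mem_momentBlock hp' hκ ⟨δ₀, hsub hmoment⟩
    exact ⟨μ, mem_image_of_mem _ (mem_maxInv_of_isFixedPt hinv hμ hfix),
      congrArg ProbabilityMeasure.toMeasure hfix⟩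

end Drift

end AttractorBlock

section Weight

variable [PseudoMetricSpace X]

/-- The weight `1 + d(x₀, x)`: a spike of height `c / weight x₀ x` at `x` moves a fixed measure by
an amount comparable to `c`, uniformly in `x`. -/
def weight (x₀ x : X) : ℝ≥0 := 1 + nndist x₀ x

variable {x₀ x y : X}

lemma one_le_weight : 1 ≤ weight x₀ x := le_self_add

lemma weight_pos : 0 < weight x₀ x := one_pos.trans_le one_le_weight

lemma nndist_le_weight : nndist x₀ x ≤ weight x₀ x := le_add_self

lemma weight_le_add_nndist : weight x₀ y ≤ weight x₀ x + nndist x y := by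
  rw [weight, weight, add_assoc]
  gcongr
  exact nndist_triangle x₀ x y

lemma div_weight_le_one {c : ℝ≥0} (hc : c ≤ 1) : c / weight x₀ x ≤ 1 :=
  div_le_one_of_le₀ (hc.trans one_le_weight) zero_le

lemma weight_iterate_le {f : X → X} {C : ℝ≥0} (hC : ∀ x, nndist x₀ (f x) ≤ C * weight x₀ x)
    (k : ℕ) (x : X) : weight x₀ (f^[k] x) ≤ (1 + C) ^ k * weight x₀ x := by
  induction k with
  | zero => simp
  | succ k ih =>
    rw [Function.iterate_succ_apply', pow_succ', mul_assoc]
    calc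
      weight x₀ (f (f^[k] x)) ≤ weight x₀ (f^[k] x) + C * weight x₀ (f^[k] x) :=
        add_le_add one_le_weight (hC _)
      _ = (1 + C) * weight x₀ (f^[k] x) := by ring
      _ ≤ (1 + C) * ((1 + C) ^ k * weight x₀ x) := by gcongr

lemma exists_nndist_apply_lt_of_mem_closedBall [ProperSpace X] {Y : Type*} [PseudoMetricSpace Y]
    {f : X → Y} (hf : Continuous f) (x₀ : X) (ρ : ℝ≥0) {e : ℝ≥0} (he : 0 < e) :
    ∃ d : ℝ≥0, 0 < d ∧ ∀ x y, nndist x₀ x ≤ ρ → nndist x y ≤ d → nndist (f x) (f y) < e := by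
  have hunif := (isCompact_closedBall x₀ ρ).uniformContinuousAt_of_continuousAt f
    (fun x _ => hf.continuousAt) (dist_mem_uniformity (NNReal.coe_pos.2 he))
  obtain ⟨d, hd, hball⟩ := Metric.mem_uniformity_dist.1 hunif
  lift d to ℝ≥0 using hd.le
  refine ⟨d / 2, half_pos hd, fun x y hx hxy => hball ?_ ?_⟩
  · exact (NNReal.coe_le_coe.2 hxy).trans_lt (NNReal.half_lt_self (NNReal.coe_pos.1 hd).ne')
  · rw [mem_closedBall']
    exact hx

end Weight

section SpikeEstimates

variable [MetricSpace X] [MeasurableSpace X] [BorelSpace X]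

/-- The transfer map `f_*` is uniformly `w_p`-continuous on the open ball of radius `δ` about `α`
in `P_p(X)`. -/
def PushforwardUniformContinuousOnBall (p : ℝ) (x₀ : X) (f : X → X) (α : Measure X) (δ : ℝ) :
    Prop :=
  ∀ e : ℝ, 0 < e → ∃ d : ℝ, 0 < d ∧ ∀ μ ∈ Pp p x₀, ∀ ν ∈ Pp p x₀,
    Wp p μ α < δ → Wp p ν α < δ → Wp p μ ν < d → Wp p (μ.map f) (ν.map f) < e

variable {p : ℝ} {x₀ : X} {f : X → X} {α : Measure X}

variable [SecondCountableTopology X]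

lemma exists_eWp_spike_lt (hp : 1 ≤ p) (hα : α ∈ Pp p x₀) {δ : ℝ≥0} (hδ : 0 < δ) :
    ∃ c : ℝ≥0, 0 < c ∧ c ≤ 1 ∧ ∀ x y, nndist x y ≤ weight x₀ x →
      eWp p (spike p (c / weight x₀ x) y α) α < δ := by
  have := hα.1
  generalize hM' : momentNorm p x₀ α = M'
  lift M' to ℝ≥0 using hM' ▸ momentNorm_ne_top (by linarith) hα with M
  refine ⟨min 1 (δ / (3 + M)), lt_min one_pos (by positivity), min_le_left _ _,
    fun x y hxy => ?_⟩
  set c := min 1 (δ / (3 + M))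
  have hmoment : momentNorm p y α ≤ (2 * weight x₀ x + M : ℝ≥0) := by
    grw [momentNorm_le_edist_add hp y x₀, hM', edist_comm, edist_nndist,
      nndist_triangle x₀ x y, nndist_le_weight, hxy, ← two_mul, ENNReal.coe_add]
  have hbound : c / weight x₀ x * (2 * weight x₀ x + M) < δ :=
    calc
      c / weight x₀ x * (2 * weight x₀ x + M)
          ≤ c / weight x₀ x * ((2 + M) * weight x₀ x) := by
        rw [add_mul]
        gcongr
        exact le_mul_of_one_le_right zero_le one_le_weight
      _ = c * (2 + M) := by field_simp [weight_pos.ne']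
      _ ≤ δ / (3 + M) * (2 + M) := by
        gcongr
        exact min_le_right _ _
      _ < δ / (3 + M) * (3 + M) := by
        have := hδ
        gcongr; norm_num
      _ = δ := div_mul_cancel₀ _ (by positivity)
  grw [eWp_spike_self_le (by linarith) (div_weight_le_one (min_le_left _ _)), hmoment]
  exact_mod_cast hbound

lemma edist_lt_of_eWp_spike_lt (hp : 1 ≤ p) {s : ℝ≥0} {r t : ℝ≥0∞} {z a b : X}
    (ht : t + t ≤ s * r) (hab : eWp p (spike p s a α) (spike p s b α) < t)
    (htail : momentNorm p z (α.restrict {x | r ≤ edist z x}) < t) : edist a b < 4 * r := by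
  by_contra! hfar
  wlog hza : 2 * r ≤ edist z a generalizing a b
  · refine this (by rwa [eWp_comm (by linarith)]) (by rwa [edist_comm]) ?_
    by_contra! hzb
    refine hfar.not_gt ((edist_triangle_left a b z).trans_lt ?_)
    rw [show (4 : ℝ≥0∞) = 2 + 2 by norm_num, add_mul]
    exact ENNReal.add_lt_add (not_le.1 hza) hzb
  have hrab : r ≤ edist a b := (le_mul_of_one_le_left zero_le (by norm_num)).trans hfar
  exact (ht.trans (mul_le_eWp_spike_add_momentNorm_restrict hp hza hrab)).not_gt
    (ENNReal.add_lt_add hab htail)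

namespace PushforwardUniformContinuousOnBall

variable {δ : ℝ≥0}

lemma exists_eWp_map_lt (h : PushforwardUniformContinuousOnBall p x₀ f α δ) (hp : 1 ≤ p)
    (hα : α ∈ Pp p x₀) (hmap : ∀ μ ∈ Pp p x₀, μ.map f ∈ Pp p x₀) {e : ℝ≥0} (he : 0 < e) :
    ∃ d : ℝ≥0, 0 < d ∧ ∀ μ ∈ Pp p x₀, ∀ ν ∈ Pp p x₀, eWp p μ α < δ →
      eWp p ν α < δ → eWp p μ ν < d → eWp p (μ.map f) (ν.map f) < e := by
  obtain ⟨d, hd, hunif⟩ := h e he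
  lift d to ℝ≥0 using hd.le
  refine ⟨d, hd, fun μ hμ ν hν hμα hνα hμν => ?_⟩
  rw [← ENNReal.ofReal_coe_nnreal] at hμα hνα hμν ⊢
  rw [← Wp_lt_iff hp (hmap μ hμ) (hmap ν hν)]
  exact hunif μ hμ ν hν ((Wp_lt_iff hp hμ hα).2 hμα) ((Wp_lt_iff hp hν hα).2 hνα)
    ((Wp_lt_iff hp hμ hν).2 hμν)

lemma exists_nndist_apply_le (h : PushforwardUniformContinuousOnBall p x₀ f α δ) (hp : 1 ≤ p)
    (hf : Measurable f) (hα : α ∈ Pp p x₀) (hδ : 0 < δ)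
    (hmap : ∀ μ ∈ Pp p x₀, μ.map f ∈ Pp p x₀) :
    ∃ C : ℝ≥0, ∀ x, nndist x₀ (f x) ≤ C * weight x₀ x := by
  have hp' : 0 < p := by linarith
  obtain ⟨d, hd, hunif⟩ := h.exists_eWp_map_lt hp hα hmap one_pos
  obtain ⟨c, hc, hc1, hspike⟩ := exists_eWp_spike_lt hp hα (lt_min hδ hd)
  generalize hM' : momentNorm p x₀ (α.map f) = M'
  lift M' to ℝ≥0 using hM' ▸ momentNorm_ne_top hp' (hmap α hα) with M
  refine ⟨(M + 1) / c, fun x => ?_⟩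
  have hclose := hspike x x (by simp)
  have hclose_map : eWp p (spike p (c / weight x₀ x) (f x) (α.map f)) (α.map f) < 1 := by
    rw [← map_spike hf]
    have := hα.1
    exact hunif _ (spike_mem_Pp hp' (div_weight_le_one hc1) x hα) α hα
      (hclose.trans_le (by simp)) (by simpa [eWp_self hp' α] using hδ) (hclose.trans_le (by simp))
  have hmul : (c / weight x₀ x : ℝ≥0) * edist x₀ (f x) ≤ M + 1 := by
    grw [mul_edist_le_momentNorm_spike hp' (α := α.map f), momentNorm_le_add_eWp hp x₀, hM',
      hclose_map]
  rw [edist_nndist] at hmul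
  norm_cast at hmul
  rw [div_mul_eq_mul_div, div_le_iff₀ weight_pos] at hmul
  rwa [div_mul_eq_mul_div, le_div_iff₀ hc, mul_comm]

lemma exists_eWp_spike_map_lt (h : PushforwardUniformContinuousOnBall p x₀ f α δ)
    (hp : 1 ≤ p) (hf : Measurable f) (hα : α ∈ Pp p x₀)
    (hmap : ∀ μ ∈ Pp p x₀, μ.map f ∈ Pp p x₀) {c : ℝ≥0} (hc : c ≤ 1)
    (hspike : ∀ x y, nndist x y ≤ weight x₀ x → eWp p (spike p (c / weight x₀ x) y α) α < δ)
    {e : ℝ≥0} (he : 0 < e) :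
    ∃ d : ℝ≥0, 0 < d ∧ ∀ x y, nndist x y ≤ d * weight x₀ x →
      eWp p (spike p (c / weight x₀ x) (f x) (α.map f)) (spike p (c / weight x₀ x) (f y) (α.map f))
        < e := by
  have hp' : 0 < p := by linarith
  obtain ⟨d, hd, hunif⟩ := h.exists_eWp_map_lt hp hα hmap he
  refine ⟨min 1 (d / 2), lt_min one_pos (by positivity), fun x y hxy => ?_⟩
  set s := c / weight x₀ x
  have hs : s ≤ 1 := div_weight_le_one hc
  have hsd : s * nndist x y < d :=
    calc
      s * nndist x y ≤ s * (d / 2 * weight x₀ x) := by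
        grw [hxy, min_le_right]
      _ = c * (d / 2) := by
        have := weight_pos (x₀ := x₀) (x := x)
        simp only [s]
        field_simp
      _ ≤ d / 2 := mul_le_of_le_one_left zero_le hc
      _ < d := NNReal.half_lt_self hd.ne'
  have := hα.1
  rw [← map_spike hf, ← map_spike hf]
  refine hunif _ (spike_mem_Pp hp' hs x hα) _ (spike_mem_Pp hp' hs y hα)
    (hspike x x (by simp)) (hspike x y ?_) ((eWp_spike_spike_le hp' hs x y).trans_lt ?_)
  · exact hxy.trans (mul_le_of_le_one_left zero_le (min_le_left _ _))
  · rw [edist_nndist]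
    exact_mod_cast hsd

lemma exists_nndist_apply_le_of_far (h : PushforwardUniformContinuousOnBall p x₀ f α δ)
    (hp : 1 ≤ p) (hf : Measurable f) (hα : α ∈ Pp p x₀) (hδ : 0 < δ)
    (hmap : ∀ μ ∈ Pp p x₀, μ.map f ∈ Pp p x₀) {e : ℝ≥0} (he : 0 < e) :
    ∃ ρ d : ℝ≥0, 0 < d ∧ ∀ x y, ρ ≤ nndist x₀ x → nndist x y ≤ d * weight x₀ x →
      nndist (f x) (f y) ≤ e * weight x₀ x := by
  obtain ⟨c, hc, hc1, hspike⟩ := exists_eWp_spike_lt hp hα hδ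
  obtain ⟨d, hd, hclose⟩ := h.exists_eWp_spike_map_lt hp hf hα hmap hc1 hspike (e := e * c / 8)
    (by positivity)
  have htail : ∀ᶠ r : ℝ≥0 in atTop,
      momentNorm p x₀ ((α.map f).restrict {x | (r : ℝ≥0∞) ≤ edist x₀ x}) < (e * c / 8 : ℝ≥0) :=
    (tendsto_momentNorm_restrict_zero (by linarith) (hmap α hα)).eventually_lt_const
      (by exact_mod_cast show 0 < e * c / 8 by positivity)
  obtain ⟨r₀, hr₀⟩ := eventually_atTop.1 htail
  refine ⟨4 * r₀ / e, d, hd, fun x y hx hxy => ?_⟩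
  set r := e * weight x₀ x / 4
  have hr : r₀ ≤ r := by
    grw [div_le_iff₀ he, nndist_le_weight] at hx
    rwa [le_div_iff₀ four_pos, mul_comm, mul_comm e]
  have hsr : c / weight x₀ x * r = e * c / 8 + e * c / 8 := by
    have := weight_pos (x₀ := x₀) (x := x)
    simp only [r]
    field_simp
    norm_num
  have hlt : edist (f x) (f y) < 4 * r :=
    edist_lt_of_eWp_spike_lt hp (by exact_mod_cast hsr.ge) (hclose x y hxy) (hr₀ r hr)
  rw [edist_nndist] at hlt
  norm_cast at hlt
  exact hlt.le.trans_eq (mul_div_cancel₀ _ four_ne_zero)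

lemma exists_nndist_apply_le_of_nndist_le [ProperSpace X]
    (h : PushforwardUniformContinuousOnBall p x₀ f α δ) (hp : 1 ≤ p) (hf : Continuous f)
    (hα : α ∈ Pp p x₀) (hδ : 0 < δ) (hmap : ∀ μ ∈ Pp p x₀, μ.map f ∈ Pp p x₀) {e : ℝ≥0}
    (he : 0 < e) :
    ∃ d : ℝ≥0, 0 < d ∧ ∀ x y, nndist x y ≤ d * weight x₀ x →
      nndist (f x) (f y) ≤ e * weight x₀ x := by
  obtain ⟨ρ, d₁, hd₁, hfar⟩ := h.exists_nndist_apply_le_of_far hp hf.measurable hα hδ hmap he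
  obtain ⟨d₂, hd₂, hnear⟩ := exists_nndist_apply_lt_of_mem_closedBall hf x₀ ρ he
  refine ⟨min d₁ (d₂ / (1 + ρ)), lt_min hd₁ (by positivity), fun x y hxy => ?_⟩
  rcases le_total ρ (nndist x₀ x) with hx | hx
  · exact hfar x y hx (hxy.trans (by grw [min_le_left]))
  · refine (hnear x y hx (hxy.trans ?_)).le.trans (le_mul_of_one_le_right zero_le one_le_weight)
    calc
      min d₁ (d₂ / (1 + ρ)) * weight x₀ x ≤ d₂ / (1 + ρ) * (1 + ρ) := by
        gcongr
        · exact min_le_right _ _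
        · exact add_le_add_right hx 1
      _ = d₂ := div_mul_cancel₀ _ (by positivity)

lemma exists_nndist_apply_le_add [ProperSpace X]
    (h : PushforwardUniformContinuousOnBall p x₀ f α δ) (hp : 1 ≤ p) (hf : Continuous f)
    (hα : α ∈ Pp p x₀) (hδ : 0 < δ) (hmap : ∀ μ ∈ Pp p x₀, μ.map f ∈ Pp p x₀) {e : ℝ≥0}
    (he : 0 < e) :
    ∃ D : ℝ≥0, ∀ x y, nndist (f x) (f y) ≤ e * weight x₀ x + D * nndist x y := by
  obtain ⟨C, hC⟩ := h.exists_nndist_apply_le hp hf.measurable hα hδ hmap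
  obtain ⟨d, hd, hcone⟩ := h.exists_nndist_apply_le_of_nndist_le hp hf hα hδ hmap he
  refine ⟨C * (2 / d + 1), fun x y => ?_⟩
  rcases le_or_gt (nndist x y) (d * weight x₀ x) with hxy | hxy
  · exact (hcone x y hxy).trans le_self_add
  · have hweight : weight x₀ x ≤ nndist x y / d := by
      rw [le_div_iff₀ hd, mul_comm]
      exact hxy.le
    calc
      nndist (f x) (f y) ≤ nndist x₀ (f x) + nndist x₀ (f y) := nndist_triangle_left _ _ _
      _ ≤ C * weight x₀ x + C * (weight x₀ x + nndist x y) := by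
        grw [hC, hC, weight_le_add_nndist (x := x) (y := y)]
      _ ≤ C * (nndist x y / d) + C * (nndist x y / d + nndist x y) := by gcongr
      _ = C * (2 / d + 1) * nndist x y := by ring
      _ ≤ e * weight x₀ x + C * (2 / d + 1) * nndist x y := le_add_self

end PushforwardUniformContinuousOnBall

end SpikeEstimates

section Attraction

variable [MeasurableSpace X] {f : X → X}

lemma iterate_map_eq_map_iterate (hf : Measurable f) (n : ℕ) (μ : Measure X) :
    (fun ν : Measure X => ν.map f)^[n] μ = μ.map f^[n] := by
  induction n with
  | zero => exact Measure.map_id.symm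
  | succ n ih =>
    rw [Function.iterate_succ_apply', ih, Measure.map_map hf (hf.iterate n),
      Function.iterate_succ']

variable [MetricSpace X] {p : ℝ} {x₀ : X}

/-- `A` attracts the `w_p`-bounded subsets of `P_p(X)` under iteration of `F`, uniformly on each of
them. -/
def WpAttracts (p : ℝ) (x₀ : X) (F : Measure X → Measure X) (A : Set (Measure X)) : Prop :=
  ∀ Bs : Set (Measure X), Bs ⊆ Pp p x₀ → WpBounded p x₀ Bs →
    ∀ e : ℝ, 0 < e → ∃ n₀ : ℕ, ∀ n, n₀ ≤ n → ∀ μ ∈ Bs, ∃ ν ∈ A, Wp p (F^[n] μ) ν < e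

variable [BorelSpace X]

lemma WpAttracts.nonempty (hp : 0 < p) {F : Measure X → Measure X} {A : Set (Measure X)}
    (hA : WpAttracts p x₀ F A) : A.Nonempty := by
  obtain ⟨n, hn⟩ := hA {Measure.dirac x₀} (by simpa using dirac_mem_Pp hp x₀ x₀)
    ⟨Wp p (Measure.dirac x₀) (Measure.dirac x₀), by simp⟩ 1 one_pos
  obtain ⟨α, hα, -⟩ := hn n le_rfl _ rfl
  exact ⟨α, hα⟩

variable [SecondCountableTopology X]

lemma exists_momentNorm_map_iterate_le (hp : 1 ≤ p) (hf : Measurable f)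
    (hmap : ∀ μ ∈ Pp p x₀, μ.map f ∈ Pp p x₀) {A : Set (Measure X)} (hA_sub : A ⊆ Pp p x₀)
    (hA_bdd : WpBounded p x₀ A)
    (hA_attr : WpAttracts p x₀ (fun μ => μ.map f) A) :
    ∃ b : ℝ≥0, ∀ r : ℝ≥0, ∃ k, 0 < k ∧ ∀ μ ∈ Pp p x₀, momentNorm p x₀ μ ≤ r →
      momentNorm p x₀ (μ.map f^[k]) ≤ b := by
  obtain ⟨M, hM⟩ := hA_bdd
  refine ⟨M.toNNReal + 1, fun r => ?_⟩
  obtain ⟨n₀, hn₀⟩ := hA_attr {μ | μ ∈ Pp p x₀ ∧ momentNorm p x₀ μ ≤ r} (fun μ hμ => hμ.1)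
    (wpBounded_setOf_momentNorm_le hp x₀ r) 1 one_pos
  refine ⟨n₀ + 1, n₀.succ_pos, fun μ hμ hμr => ?_⟩
  obtain ⟨ν, hν, hlt⟩ := hn₀ (n₀ + 1) n₀.le_succ μ ⟨hμ, hμr⟩
  have hiter : (fun μ : Measure X => μ.map f)^[n₀ + 1] μ ∈ Pp p x₀ :=
    Set.MapsTo.iterate hmap _ hμ
  rw [Wp_lt_iff hp hiter (hA_sub hν), ENNReal.ofReal_one, iterate_map_eq_map_iterate hf] at hlt
  grw [momentNorm_le_add_eWp hp x₀ (ν := ν), hlt, ← ofReal_Wp_dirac hp (hA_sub hν), hM ν hν]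
  simp [ENNReal.ofReal]

/-- Testing the uniform bound on the spikes at `x` over `δ_{x₀}` of height `r / (r + d(x₀, x))`,
whose moment norm is at most `r`. -/
lemma exists_nndist_iterate_le (hp : 1 ≤ p) (hf : Measurable f) {b : ℝ≥0}
    (hb : ∀ r : ℝ≥0, ∃ k, 0 < k ∧ ∀ μ ∈ Pp p x₀, momentNorm p x₀ μ ≤ r →
      momentNorm p x₀ (μ.map f^[k]) ≤ b) {l : ℝ≥0} (hl : 0 < l) :
    ∃ k, 0 < k ∧ ∀ x, nndist x₀ (f^[k] x) ≤ b + l * nndist x₀ x := by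
  have hp' : 0 < p := by linarith
  set r := (b + 1) / l
  have hr : 0 < r := by positivity
  obtain ⟨k, hk, hmoment⟩ := hb r
  refine ⟨k, hk, fun x => ?_⟩
  set s := r / (r + nndist x₀ x)
  have hs : s ≤ 1 := div_le_one_of_le₀ le_self_add zero_le
  have hspike : momentNorm p x₀ (spike p s x (Measure.dirac x₀)) ≤ r := by
    have hα := dirac_mem_Pp hp' x₀ x₀
    have := (spike_mem_Pp hp' hs x hα).1
    rw [← eWp_dirac hp]
    grw [eWp_spike_self_le hp' hs x, momentNorm_dirac hp', edist_nndist]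
    norm_cast
    rw [div_mul_eq_mul_div, nndist_comm]
    exact div_le_of_le_mul₀ zero_le zero_le (mul_le_mul_right le_add_self r)
  have hmul : s * edist x₀ (f^[k] x) ≤ b := by
    grw [mul_edist_le_momentNorm_spike hp' (α := (Measure.dirac x₀).map f^[k]),
      ← map_spike (hf.iterate k),
      hmoment _ (spike_mem_Pp hp' hs x (dirac_mem_Pp hp' x₀ x₀)) hspike]
  rw [edist_nndist] at hmul
  norm_cast at hmul
  rw [div_mul_eq_mul_div, div_le_iff₀ (by positivity)] at hmul
  refine le_of_mul_le_mul_left (hmul.trans ?_) hr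
  calc
    b * (r + nndist x₀ x) ≤ b * r + (b + 1) * nndist x₀ x := by
      rw [mul_add]
      gcongr
      exact le_self_add
    _ = r * (b + l * nndist x₀ x) := by
      simp only [r]
      field_simp

end Attraction

section NoisyDrift

open ProbabilityTheory

variable [MetricSpace X] [MeasurableSpace X] [BorelSpace X] {p : ℝ} {x₀ : X} {f : X → X}

lemma momentNorm_bind_le_of_nndist_le (hp : 1 ≤ p) {κ : Kernel X X} [IsMarkovKernel κ]
    {η B D : ℝ≥0} {a : X} (hκ : ∀ y, momentNorm p (f y) (κ y) ≤ η)
    (hf : ∀ y, nndist (f a) (f y) ≤ B + D * nndist a y) (μ : Measure X) [IsProbabilityMeasure μ] :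
    momentNorm p (f a) (μ.bind κ) ≤ D * momentNorm p a μ + (B + η : ℝ≥0) := by
  refine momentNorm_bind_le hp (fun y => ?_) μ
  grw [momentNorm_le_edist_add hp (f a) (f y), hκ y, edist_nndist, hf y, edist_nndist]
  norm_cast
  apply le_of_eq
  ring

lemma momentNorm_pow_succ_le (hp : 1 ≤ p) {κ : Kernel X X} [IsMarkovKernel κ] {η B D r : ℝ≥0}
    {k : ℕ} {x : X} (hκ : ∀ y, momentNorm p (f y) (κ y) ≤ η)
    (hf : ∀ y, nndist (f (f^[k] x)) (f y) ≤ B + D * nndist (f^[k] x) y)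
    (hr : momentNorm p (f^[k] x) ((κ ^ k : Kernel X X) x) ≤ r) :
    momentNorm p (f^[k + 1] x) ((κ ^ (k + 1) : Kernel X X) x) ≤ (D * r + (B + η) : ℝ≥0) := by
  have := isMarkovKernel_pow κ k
  rw [Function.iterate_succ_apply', pow_succ']
  refine (momentNorm_bind_le_of_nndist_le hp hκ hf ((κ ^ k : Kernel X X) x)).trans ?_
  grw [hr]
  norm_cast

lemma exists_momentNorm_pow_le (hp : 1 ≤ p) {C : ℝ≥0}
    (hC : ∀ x, nndist x₀ (f x) ≤ C * weight x₀ x)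
    (hf : ∀ e : ℝ≥0, 0 < e → ∃ D : ℝ≥0, ∀ x y,
      nndist (f x) (f y) ≤ e * weight x₀ x + D * nndist x y) (k : ℕ) {e : ℝ≥0} (he : 0 < e) :
    ∃ η : ℝ≥0, 0 < η ∧ ∀ (κ : Kernel X X) [IsMarkovKernel κ],
      (∀ x, momentNorm p (f x) (κ x) ≤ η) →
        ∀ x, momentNorm p (f^[k] x) ((κ ^ k : Kernel X X) x) ≤ (e * weight x₀ x : ℝ≥0) := by
  induction k generalizing e with
  | zero =>
    refine ⟨1, one_pos, fun κ _ _ x => ?_⟩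
    change momentNorm p x (Kernel.id x) ≤ _
    rw [Kernel.id_apply, momentNorm_dirac (by linarith), edist_self]
    exact zero_le
  | succ k ih =>
    obtain ⟨D, hD⟩ := hf (e / (3 * (1 + C) ^ k)) (by positivity)
    obtain ⟨η, hη, hdev⟩ := ih (e := e / (3 * (D + 1))) (by positivity)
    refine ⟨min η (e / 3), lt_min hη (by positivity), fun κ _ hκ x => ?_⟩
    refine (momentNorm_pow_succ_le hp (η := e / 3) (fun y => (hκ y).trans (by simp)) (hD _)
      (hdev κ (fun y => (hκ y).trans (by simp)) x)).trans (ENNReal.coe_le_coe.2 ?_)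
    have hD' : D * (e / (3 * (D + 1)) * weight x₀ x) ≤ e / 3 * weight x₀ x := by
      rw [← mul_assoc]
      gcongr
      calc
        D * (e / (3 * (D + 1))) ≤ (D + 1) * (e / (3 * (D + 1))) := by
          gcongr
          exact le_self_add
        _ = e / 3 := by field_simp
    have ha : e / (3 * (1 + C) ^ k) * weight x₀ (f^[k] x) ≤ e / 3 * weight x₀ x := by
      grw [weight_iterate_le hC k x, ← mul_assoc]
      apply le_of_eq
      field_simp
    calc
      _ ≤ e / 3 * weight x₀ x + (e / 3 * weight x₀ x + e / 3 * weight x₀ x) := by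
        gcongr
        exact le_mul_of_one_le_right zero_le one_le_weight
      _ = e * weight x₀ x := by ring

lemma exists_momentNorm_iterate_markovMap_le (hp : 1 ≤ p) {C : ℝ≥0}
    (hC : ∀ x, nndist x₀ (f x) ≤ C * weight x₀ x)
    (hf : ∀ e : ℝ≥0, 0 < e → ∃ D : ℝ≥0, ∀ x y,
      nndist (f x) (f y) ≤ e * weight x₀ x + D * nndist x y) {b : ℝ≥0} {k : ℕ}
    (hk : ∀ x, nndist x₀ (f^[k] x) ≤ b + 4⁻¹ * nndist x₀ x) :
    ∃ η : ℝ≥0, 0 < η ∧ ∀ (κ : Kernel X X) [IsMarkovKernel κ],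
      (∀ x, momentNorm p (f x) (κ x) ≤ η) → ∀ μ : ProbabilityMeasure X,
        momentNorm p x₀ ((markovMap κ)^[k] μ : Measure X) ≤
          2⁻¹ * momentNorm p x₀ μ + (1 - 2⁻¹) * (2 * b + 2⁻¹ : ℝ≥0) := by
  obtain ⟨η, hη, hdev⟩ := exists_momentNorm_pow_le hp hC hf k (e := 4⁻¹) (by positivity)
  refine ⟨η, hη, fun κ _ hκ μ => ?_⟩
  rw [(semiconj_coe_markovMap.iterate_right k).eq, bind_iterate_eq_bind_pow]
  have hmoment : ∀ x, momentNorm p x₀ ((κ ^ k : Kernel X X) x) ≤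
      2⁻¹ * edist x₀ x + (1 - 2⁻¹) * (2 * b + 2⁻¹ : ℝ≥0) := by
    intro x
    have := isMarkovKernel_pow κ k
    grw [momentNorm_le_edist_add hp x₀ (f^[k] x), hdev κ hκ x, edist_nndist, edist_nndist, hk x]
    rw [ENNReal.one_sub_inv_two, ← ENNReal.coe_inv_two, weight]
    norm_cast
    rw [← NNReal.coe_le_coe]
    push_cast
    linarith
  exact momentNorm_bind_le hp hmoment μ

lemma exists_momentBlock_superset (hp : 1 ≤ p) {κ : Kernel X X}
    [IsMarkovKernel κ] {C η : ℝ≥0} (hC : ∀ x, nndist x₀ (f x) ≤ C * weight x₀ x)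
    (hκ : ∀ x, momentNorm p (f x) (κ x) ≤ η) {k : ℕ} (hk : 0 < k) {a : ℝ≥0∞} (ha : a ≤ 1)
    {R : ℝ≥0} (hdrift : ∀ μ : ProbabilityMeasure X,
      momentNorm p x₀ ((markovMap κ)^[k] μ : Measure X) ≤
        a * momentNorm p x₀ μ + (1 - a) * R) (r : ℝ≥0) :
    ∃ R' : ℝ≥0, {μ : ProbabilityMeasure X | momentNorm p x₀ μ ≤ r} ⊆ momentBlock p x₀ κ R' := by
  have hstep : ∀ x, momentNorm p x₀ (κ x) ≤ C * edist x₀ x + (C + η : ℝ≥0) := by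
    intro x
    grw [momentNorm_le_edist_add hp x₀ (f x), hκ x, edist_nndist, hC, edist_nndist, weight]
    norm_cast
    apply le_of_eq
    ring
  refine exists_sublevel_subset_orbitSublevel ha ENNReal.coe_ne_top hk hdrift
    (fun r => ⟨C * r + (C + η), fun μ hμ => ?_⟩) r
  exact (momentNorm_bind_le hp hstep μ).trans (by grw [hμ]; norm_cast)

end NoisyDrift

section Continuation

open ProbabilityTheory

section WassersteinSequences

variable [MetricSpace X] [MeasurableSpace X] [BorelSpace X] {p : ℝ} {x₀ : X}

lemma WpAttracts.exists_pushforwardUniformContinuousOnBall (hp : 0 < p) {F : Measure X → Measure X}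
    {A : Set (Measure X)} (hA : WpAttracts p x₀ F A) {f : X → X} {δ : ℝ}
    (hunif : ∀ e : ℝ, 0 < e → ∃ d : ℝ, 0 < d ∧ ∀ μ ∈ Pp p x₀, ∀ ν ∈ Pp p x₀,
      (∃ α ∈ A, Wp p μ α < δ) → (∃ α ∈ A, Wp p ν α < δ) →
      Wp p μ ν < d → Wp p (μ.map f) (ν.map f) < e) :
    ∃ α ∈ A, PushforwardUniformContinuousOnBall p x₀ f α δ := by
  obtain ⟨α, hα⟩ := hA.nonempty hp
  exact ⟨α, hα, fun e he => (hunif e he).imp fun d hd => ⟨hd.1, fun μ hμ ν hν hμα hνα =>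
    hd.2 μ hμ ν hν ⟨α, hα, hμα⟩ ⟨α, hα, hνα⟩⟩⟩

variable [SecondCountableTopology X]

lemma WpSeqCompact.wpBounded (hp : 1 ≤ p) {A : Set (Measure X)} (hA_sub : A ⊆ Pp p x₀)
    (hA : WpSeqCompact p A) : WpBounded p x₀ A := by
  by_contra! hunbdd
  simp only [WpBounded, not_exists, not_forall, not_le] at hunbdd
  choose μs hμs hlarge using fun n : ℕ => hunbdd n
  obtain ⟨μ, hμ, φ, hφ, hlim⟩ := hA μs hμs
  generalize hM' : momentNorm p x₀ μ = M'
  lift M' to ℝ≥0 using hM' ▸ momentNorm_ne_top (by linarith) (hA_sub hμ) with M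
  obtain ⟨n, hn, hMn⟩ :=
    ((hlim.eventually_lt_const one_pos).and (eventually_ge_atTop ⌈M + 1⌉₊)).exists
  rw [Wp_lt_iff hp (hA_sub (hμs _)) (hA_sub hμ), ENNReal.ofReal_one] at hn
  have hle : momentNorm p x₀ (μs (φ n)) ≤ (M + 1 : ℝ≥0) := by
    grw [momentNorm_le_add_eWp hp x₀ (ν := μ), hn, hM']
    simp
  have hφn : (M + 1 : ℝ) ≤ φ n :=
    (Nat.ceil_le.1 hMn).trans (Nat.cast_le.2 (hφ.le_apply))
  rw [← ofReal_Wp_dirac hp (hA_sub (hμs _)), ENNReal.ofReal_le_coe] at hle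
  push_cast at hle
  linarith [hlarge (φ n)]

lemma continuous_kernelMap (hp : 1 ≤ p) {κ : Kernel X X} [IsMarkovKernel κ]
    (hκ : ∀ x, κ x ∈ Pp p x₀) (hcont : ∀ (xs : ℕ → X) (x : X), Tendsto xs atTop (𝓝 x) →
      WpTendsto p (fun n => κ (xs n)) (κ x)) : Continuous (kernelMap κ) :=
  continuous_iff_seqContinuous.2 fun xs x hx =>
    tendsto_of_wpTendsto hp (fun n => hκ (xs n)) (hκ x) (hcont xs x hx)

end WassersteinSequences

theorem exists_noiseBound_isWeakAttractorBlock
    [MetricSpace X] [MeasurableSpace X] [BorelSpace X] [ProperSpace X]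
    {p : ℝ} (hp : 1 ≤ p) {x₀ : X} {f : X → X} (hf : Continuous f)
    (hmap : ∀ μ ∈ Pp p x₀, μ.map f ∈ Pp p x₀)
    {A : Set (Measure X)} (hA_sub : A ⊆ Pp p x₀) (hA_bdd : WpBounded p x₀ A)
    (hA_attr : WpAttracts p x₀ (fun μ => μ.map f) A)
    {α : Measure X} (hα : α ∈ Pp p x₀) {δ : ℝ} (hδ : 0 < δ)
    (hunif : PushforwardUniformContinuousOnBall p x₀ f α δ) :
    ∃ η : ℝ, 0 < η ∧ ∀ (κ : Kernel X X) [IsMarkovKernel κ],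
      Continuous (kernelMap κ) → (∀ x, κ x ∈ Pp p x₀) →
      (∀ x, Wp p (κ x) (Measure.dirac (f x)) ≤ η) →
      ∃ N, IsWeakAttractorBlock p x₀ (fun μ => μ.bind κ) N := by
  lift δ to ℝ≥0 using hδ.le
  obtain ⟨C, hC⟩ := hunif.exists_nndist_apply_le hp hf.measurable hα hδ hmap
  obtain ⟨b, hb⟩ := exists_momentNorm_map_iterate_le hp hf.measurable hmap hA_sub hA_bdd hA_attr
  obtain ⟨k, hk, hcontr⟩ := exists_nndist_iterate_le hp hf.measurable hb (l := 4⁻¹) (by positivity)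
  obtain ⟨η, hη, hdrift⟩ := exists_momentNorm_iterate_markovMap_le hp hC
    (fun e he => hunif.exists_nndist_apply_le_add hp hf hα hδ hmap he) hcontr
  refine ⟨η, hη, fun κ _ hfeller hκ hnoise => ?_⟩
  have hκf : ∀ x, momentNorm p (f x) (κ x) ≤ η := fun x => by
    have hle := (Wp_le_iff hp (hκ x) (dirac_mem_Pp (by linarith) x₀ (f x))
      (NNReal.coe_nonneg η)).1 (hnoise x)
    rwa [eWp_dirac hp, ENNReal.ofReal_coe_nnreal] at hle
  obtain ⟨R', hR'⟩ := exists_momentBlock_superset hp hC hκf hk (by simp) (hdrift κ hκf) _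
  exact ⟨_, isWeakAttractorBlock_momentBlock hp hfeller (by simp) (hdrift κ hκf) hR'⟩

theorem wasserstein_weak_continuation_of_global_attractor_general
    [MetricSpace X] [MeasurableSpace X] [BorelSpace X] [ProperSpace X]
    {p : ℝ} (hp : 1 ≤ p) {x₀ : X} {f : X → X} (hf : Continuous f)
    (hmap : ∀ μ ∈ Pp p x₀, μ.map f ∈ Pp p x₀)
    {A : Set (Measure X)} (hA_sub : A ⊆ Pp p x₀) (hA_bdd : WpBounded p x₀ A)
    (hA_attr : WpAttracts p x₀ (fun μ => μ.map f) A) {δ : ℝ} (hδ : 0 < δ)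
    (hunif : ∃ α ∈ Pp p x₀, PushforwardUniformContinuousOnBall p x₀ f α δ)
    {q : ℕ → Kernel X X} [∀ n, IsMarkovKernel (q n)] (hq_mem : ∀ n x, q n x ∈ Pp p x₀)
    (hq_cont : ∀ n, Continuous (kernelMap (q n))) {ε : ℕ → ℝ} (hε : Tendsto ε atTop (𝓝 0))
    (hnoise : ∀ n x, Wp p (q n x) (Measure.dirac (f x)) ≤ ε n) :
    ∃ n₀, ∀ n, n₀ ≤ n → ∃ N, IsWeakAttractorBlock p x₀ (fun μ => μ.bind (q n)) N := by
  obtain ⟨α, hα, hunifα⟩ := hunif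
  obtain ⟨η, hη, hblock⟩ :=
    exists_noiseBound_isWeakAttractorBlock hp hf hmap hA_sub hA_bdd hA_attr hα hδ hunifα
  obtain ⟨n₀, hn₀⟩ := eventually_atTop.1 (hε.eventually_le_const hη)
  exact ⟨n₀, fun n hn => hblock (q n) (hq_cont n) (hq_mem n) fun x =>
    (hnoise n x).trans (hn₀ n hn)⟩

end Continuation

/-- **Stability of the global attractor under Markov–Wasserstein noise.** If the transfer map
`f_*` of a continuous map `f` on a proper complete separable metric space has a global
attractor `A` in `(P_p(X), w_p)` and is uniformly continuous near it, and `Pₙ` are MW-maps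
of order `p` relative to `f` with noise levels `εₙ → 0`, then for all large `n` there is a
closed, positively `Pₙ`-invariant isolating neighborhood `Nₙ` whose maximal invariant set
`Kₙ = A_{Pₙ}(Nₙ)` is nonempty, weakly (sequentially) compact, a weak attractor for `Pₙ`,
contains all measures on bounded full `Pₙ`-orbits in `P_p(X)`, and contains a stationary
measure of `Pₙ`. -/
theorem wasserstein_weak_continuation_of_global_attractor
    [MetricSpace X] [MeasurableSpace X] [BorelSpace X] [ProperSpace X] [CompleteSpace X]
    [TopologicalSpace.SeparableSpace X]
    (p : ℝ) (hp : 1 ≤ p) (x₀ : X) (f : X → X) (hf : Continuous f)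
    (hmap : ∀ μ ∈ Pp p x₀, μ.map f ∈ Pp p x₀)
    (hcont : ∀ (μs : ℕ → Measure X) (μ : Measure X), (∀ n, μs n ∈ Pp p x₀) → μ ∈ Pp p x₀ →
      WpTendsto p μs μ → WpTendsto p (fun n => (μs n).map f) (μ.map f))
    (A : Set (Measure X)) (hA_sub : A ⊆ Pp p x₀) (hA_cpt : WpSeqCompact p A)
    (hA_inv : maxInv (fun μ : Measure X => μ.map f) A = A)
    (hA_attr : ∀ Bs : Set (Measure X), Bs ⊆ Pp p x₀ → WpBounded p x₀ Bs →
      ∀ e : ℝ, 0 < e → ∃ n₀ : ℕ, ∀ n, n₀ ≤ n → ∀ μ ∈ Bs,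
        ∃ ν ∈ A, Wp p ((fun μ : Measure X => μ.map f)^[n] μ) ν < e)
    (δA : ℝ) (hδA : 0 < δA)
    (hunif : ∀ e : ℝ, 0 < e → ∃ d : ℝ, 0 < d ∧ ∀ μ ∈ Pp p x₀, ∀ ν ∈ Pp p x₀,
      (∃ α ∈ A, Wp p μ α < δA) → (∃ α ∈ A, Wp p ν α < δA) →
      Wp p μ ν < d → Wp p (μ.map f) (ν.map f) < e)
    (q : ℕ → ProbabilityTheory.Kernel X X) [∀ n, ProbabilityTheory.IsMarkovKernel (q n)]
    (P : ℕ → Measure X → Measure X)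
    (hP : ∀ (n : ℕ) (μ : Measure X), P n μ = μ.bind (fun x => q n x))
    (hq_mem : ∀ (n : ℕ) (x : X), (q n x : Measure X) ∈ Pp p x₀)
    (hq_cont : ∀ (n : ℕ) (xs : ℕ → X) (x : X), Tendsto xs atTop (𝓝 x) →
      Tendsto (fun k => Wp p (q n (xs k)) (q n x)) atTop (𝓝 0))
    (hP_map : ∀ n, ∀ μ ∈ Pp p x₀, P n μ ∈ Pp p x₀)
    (hP_cont : ∀ (n : ℕ) (μs : ℕ → Measure X) (μ : Measure X), (∀ k, μs k ∈ Pp p x₀) →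
      μ ∈ Pp p x₀ → WpTendsto p μs μ → WpTendsto p (fun k => P n (μs k)) (P n μ))
    (hP_convex : ∀ (n : ℕ) (t : ℝ), 0 ≤ t → t ≤ 1 → ∀ μ ∈ Pp p x₀, ∀ ν ∈ Pp p x₀,
      P n (mix t μ ν) = mix t (P n μ) (P n ν))
    (ε : ℕ → ℝ) (hε : Tendsto ε atTop (𝓝 0))
    (hnoise : ∀ (n : ℕ) (x : X), Wp p (q n x) (Measure.dirac (f x)) ≤ ε n) :
    ∃ n₀ : ℕ, ∀ n, n₀ ≤ n → ∃ Nn : Set (Measure X),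
      Nn ⊆ Pp p x₀ ∧
      WpClosed p x₀ Nn ∧
      PosInvariant (P n) Nn ∧
      (∃ δ : ℝ, 0 < δ ∧
        {μ : Measure X | μ ∈ Pp p x₀ ∧ ∃ ν ∈ maxInv (P n) Nn, Wp p μ ν < δ} ⊆ Nn) ∧
      (maxInv (P n) Nn).Nonempty ∧
      WeakSeqCompact (maxInv (P n) Nn) ∧
      omegaWeakM (P n) Nn ⊆ maxInv (P n) Nn ∧
      (∀ σ : ℤ → Measure X, (∀ k, σ k ∈ Pp p x₀) →
        (∀ k : ℤ, P n (σ k) = σ (k + 1)) →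
        (∃ R : ℝ, ∀ k : ℤ, Wp p (σ k) (Measure.dirac x₀) ≤ R) →
        σ 0 ∈ maxInv (P n) Nn) ∧
      ∃ μ ∈ maxInv (P n) Nn, P n μ = μ := by
  obtain rfl : P = fun n μ => μ.bind (q n) := funext₂ hP
  obtain ⟨α, hα, hunifα⟩ :=
    WpAttracts.exists_pushforwardUniformContinuousOnBall (by linarith) hA_attr hunif
  obtain ⟨n₀, hn₀⟩ := wasserstein_weak_continuation_of_global_attractor_general hp hf hmap hA_sub
    (hA_cpt.wpBounded hp hA_sub) hA_attr hδA ⟨α, hA_sub hα, hunifα⟩ hq_mem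
    (fun n => continuous_kernelMap hp (hq_mem n) (hq_cont n)) hε hnoise
  exact ⟨n₀, fun n hn => (hn₀ n hn).imp fun N hN => ⟨hN.wpClosed.1, hN.wpClosed, hN.posInvariant,
    hN.isolating, hN.exists_fixedPt.imp fun _ h => h.1, hN.weakSeqCompact, hN.omegaWeakM_subset,
    hN.mem_of_boundedOrbit, hN.exists_fixedPt⟩⟩
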